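/- arXiv:1504.02625 — 4 statements merged into one kernel-verified Lean document; each statement's English description precedes it below -/
import Mathlib

section
/- Let τ ≠ 0 be such that τ⁻¹ belongs to the resolvent set of T₁ and to the resolvent set of T₂. Then for every f ∈ H the following three homogeneous equations are equivalent: (i) f − τ(T₁+T₂)f = 0; (ii) f − τ²·W₁(τ)f = 0; (iii) f − τ²·W₂(τ)f = 0. In particular, the three equations have the same solution set in H. -/
open MeasureTheory Complex

noncomputable section

/-- The measure on `ℝ` given by restricting Lebesgue measure to `[a,b]`. -/
abbrev muI (a b : ℝ) : MeasureTheory.Measure ℝ :=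
  MeasureTheory.volume.restrict (Set.Icc a b)

/-!
In a unital algebra, if `R₁`, `R₂` are the inverses of `1 - τT₁`, `1 - τT₂` and `R₁ = 1 + τS₁`,
then `1 - τ²R₂S₁T₂ = R₂R₁(1 - τ(T₁ + T₂))`, so `1 - τ²R₂S₁T₂` and `1 - τ(T₁ + T₂)` have the same
kernel. What is left is to identify the resolvent of a partial integral operator `T` as `1 + τS`.
Orthonormality makes `T` diagonal: `T = ∑ Hₖ Pₖ` with `Pₖ T = Hₖ Pₖ`. Hence
`Pₖ f = (1 - τHₖ) Pₖ (R f)` for the inverse `R` of `1 - τT`, so that `Pₖ f` vanishes wherever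
`1 - τHₖ` does, and dividing by `1 - τHₖ` elsewhere gives `S = T R`.
-/

section Algebra

theorem one_sub_sq_smul_mul_eq {𝕜 A : Type*} [CommRing 𝕜] [Ring A] [Algebra 𝕜 A]
    {T₁ T₂ S₁ R₁ R₂ : A} {τ : 𝕜} (hR₁ : R₁ * (1 - τ • T₁) = 1) (hR₂ : R₂ * (1 - τ • T₂) = 1)
    (hS₁ : R₁ = 1 + τ • S₁) :
    1 - τ ^ 2 • (R₂ * S₁ * T₂) = R₂ * R₁ * (1 - τ • (T₁ + T₂)) :=
  calc
    1 - τ ^ 2 • (R₂ * S₁ * T₂) = R₂ * (1 - τ • T₂) - τ ^ 2 • (R₂ * S₁ * T₂) := by rw [hR₂]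
    _ = R₂ * (1 - τ • ((1 + τ • S₁) * T₂)) := by
      simp only [mul_sub, mul_one, add_mul, one_mul, smul_add, mul_add, mul_smul_comm,
        smul_mul_assoc, smul_smul, mul_assoc, sq]
      abel
    _ = R₂ * (R₁ * (1 - τ • T₁) - τ • (R₁ * T₂)) := by rw [hR₁, hS₁]
    _ = R₂ * R₁ * (1 - τ • (T₁ + T₂)) := by
      simp only [mul_sub, mul_one, smul_add, mul_add, mul_smul_comm, mul_assoc]
      abel

theorem sub_smul_add_apply_eq_zero_iff {𝕜 V : Type*} [CommRing 𝕜] [AddCommGroup V]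
    [TopologicalSpace V] [IsTopologicalAddGroup V] [Module 𝕜 V] [ContinuousConstSMul 𝕜 V]
    {T₁ T₂ S₁ R₁ R₂ : V →L[𝕜] V} {τ : 𝕜}
    (hR₁ : R₁ * (1 - τ • T₁) = 1 ∧ (1 - τ • T₁) * R₁ = 1)
    (hR₂ : R₂ * (1 - τ • T₂) = 1 ∧ (1 - τ • T₂) * R₂ = 1) (hS₁ : R₁ = 1 + τ • S₁) (f : V) :
    f - τ • (T₁ + T₂) f = 0 ↔ f - τ ^ 2 • (R₂ * S₁ * T₂) f = 0 := by
  have left_inv : (1 - τ • T₁) * (1 - τ • T₂) * (R₂ * R₁) = 1 := by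
    rw [mul_assoc, ← mul_assoc _ R₂, hR₂.2, one_mul, hR₁.2]
  have injective : Function.Injective (R₂ * R₁) :=
    Function.LeftInverse.injective (g := ⇑((1 - τ • T₁) * (1 - τ • T₂))) fun v =>
      DFunLike.congr_fun left_inv v
  have factor : f - τ ^ 2 • (R₂ * S₁ * T₂) f = (R₂ * R₁) (f - τ • (T₁ + T₂) f) :=
    DFunLike.congr_fun (one_sub_sq_smul_mul_eq hR₁.1 hR₂.1 hS₁) f
  rw [factor, map_eq_zero_iff _ injective]

end Algebra

section DiagonalOperator

variable {𝕜 Z ι : Type*} [NormedField 𝕜] [MeasurableSpace Z] {M : Measure Z} {q : ENNReal}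
  [Fact (1 ≤ q)] {T S R : Lp 𝕜 q M →L[𝕜] Lp 𝕜 q M} {P : ι → Lp 𝕜 q M →L[𝕜] Lp 𝕜 q M}
  {H : ι → Z → 𝕜} {τ : 𝕜}

theorem ae_apply_eq_one_sub_mul_apply_resolvent [Countable ι]
    (hPT : ∀ k f, ∀ᵐ z ∂M, P k (T f) z = H k z * P k f z) (hR : (1 - τ • T) * R = 1)
    (f : Lp 𝕜 q M) : ∀ᵐ z ∂M, ∀ k, P k f z = (1 - τ * H k z) * P k (R f) z := by
  refine ae_all_iff.2 fun k => ?_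
  have hf : P k f = P k (R f) - τ • P k (T (R f)) := by
    rw [← map_smul, ← map_sub]
    exact congrArg (P k) (DFunLike.congr_fun hR f).symm
  rw [hf]
  filter_upwards [Lp.coeFn_sub (P k (R f)) (τ • P k (T (R f))), Lp.coeFn_smul τ (P k (T (R f))),
    hPT k (R f)] with z hsub hsmul hz
  rw [hsub, Pi.sub_apply, hsmul, Pi.smul_apply, hz, smul_eq_mul]
  ring

theorem resolvent_eq_one_add_smul_of_diagonal [Fintype ι]
    (hT : ∀ f, ∀ᵐ z ∂M, T f z = ∑ k, H k z * P k f z)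
    (hPT : ∀ k f, ∀ᵐ z ∂M, P k (T f) z = H k z * P k f z)
    (hS : ∀ f, ∀ᵐ z ∂M, S f z = ∑ k, H k z / (1 - τ * H k z) * P k f z)
    (hR : (1 - τ • T) * R = 1) : R = 1 + τ • S := by
  have hSTR : S = T * R := by
    ext1 f
    apply Lp.ext
    filter_upwards [hS f, hT (R f), ae_apply_eq_one_sub_mul_apply_resolvent hPT hR f,
      ae_apply_eq_one_sub_mul_apply_resolvent hPT hR (R f)] with z hSf hTRf hf hRf
    refine hSf.trans (.trans (Finset.sum_congr rfl fun k _ => ?_) hTRf.symm)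
    by_cases hz : 1 - τ * H k z = 0
    · rw [hf k, hRf k, hz]
      ring
    · rw [hf k, ← mul_assoc, div_mul_cancel₀ _ hz]
  rw [hSTR, ← smul_mul_assoc, ← sub_eq_iff_eq_add, ← hR, sub_mul, one_mul]

end DiagonalOperator

section DegenerateKernel

variable {𝕜 Y ι : Type*} [RCLike 𝕜] [MeasurableSpace Y] {ν : Measure Y} [Fintype ι]
  {ψ : ι → Y → 𝕜}

theorem integral_sum_mul_star_mul (hψ : ∀ k, MemLp (ψ k) 2 ν) {g : Y → 𝕜} (hg : MemLp g 2 ν)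
    (c : ι → 𝕜) :
    ∫ t, (∑ k, c k * star (ψ k t)) * g t ∂ν = ∑ k, c k * ∫ t, star (ψ k t) * g t ∂ν := by
  simp_rw [Finset.sum_mul, mul_assoc, ← integral_const_mul]
  exact integral_finsetSum _ fun k _ => ((hψ k).star.integrable_mul hg).const_mul (c k)

theorem integral_star_mul_sum_of_orthonormal [DecidableEq ι] (hψ : ∀ k, MemLp (ψ k) 2 ν)
    (hON : ∀ i j, ∫ t, star (ψ i t) * ψ j t ∂ν = if i = j then 1 else 0) (c : ι → 𝕜) (j : ι) :
    ∫ t, star (ψ j t) * ∑ k, c k * ψ k t ∂ν = c j := by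
  simp_rw [Finset.mul_sum, mul_left_comm (star _)]
  refine (integral_finsetSum _ fun k _ =>
    ((hψ j).star.integrable_mul (hψ k)).const_mul (c k)).trans ?_
  simp_rw [integral_const_mul, Pi.mul_apply, Pi.star_apply, hON]
  simp

end DegenerateKernel

theorem ae_memLp_prodMk_left {X Y E : Type*} [MeasurableSpace X] [MeasurableSpace Y]
    [NormedAddCommGroup E] {μ : Measure X} {ν : Measure Y} [SFinite ν] {q : ENNReal}
    (hq₀ : q ≠ 0) (hq : q ≠ ⊤) {f : X × Y → E} (hf : MemLp f q (μ.prod ν)) :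
    ∀ᵐ x ∂μ, MemLp (fun y => f (x, y)) q ν := by
  have integrable : Integrable (fun z => ‖f z‖ ^ q.toReal) (μ.prod ν) :=
    (integrable_norm_rpow_iff hf.1 hq₀ hq).2 hf
  filter_upwards [hf.1.prodMk_left, ((integrable_prod_iff integrable.1).1 integrable).1]
    with x hmeas hint
  exact (integrable_norm_rpow_iff hmeas hq₀ hq).1 hint

theorem ae_comp_fst_of_ae {X Y Z : Type*} [MeasurableSpace X] [MeasurableSpace Y]
    [MeasurableSpace Z] {μ : Measure X} {ν : Measure Y} {M : Measure Z} {e : Z → X × Y}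
    (he : Measure.QuasiMeasurePreserving e M (μ.prod ν)) {r : X → Prop} (hr : ∀ᵐ x ∂μ, r x) :
    ∀ᵐ z ∂M, r (e z).1 :=
  (Measure.quasiMeasurePreserving_fst.comp he).ae hr

section PartialIntegralOperator

/- The coordinates `e` of `Z` let one argument serve both partial integral operators on `X × Y`:
`e` is the identity when the second variable is integrated and the swap when the first one is. -/
variable {𝕜 X Y Z ι : Type*} [RCLike 𝕜] [MeasurableSpace X] [MeasurableSpace Y] [MeasurableSpace Z]
  {μ : Measure X} {ν : Measure Y} {M : Measure Z} [Fintype ι] {ψ : ι → Y → 𝕜}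
  {p : ι → X → 𝕜} {e : Z ≃ᵐ X × Y} {T S R : Lp 𝕜 2 M →L[𝕜] Lp 𝕜 2 M}
  {P : ι → Lp 𝕜 2 M →L[𝕜] Lp 𝕜 2 M} {τ : 𝕜}

theorem partialIntegral_ae_eq_sum [SFinite ν] (he : MeasurePreserving e M (μ.prod ν))
    (hψ : ∀ k, MemLp (ψ k) 2 ν)
    (hT : ∀ f, ∀ᵐ z ∂M, T f z =
      ∫ t, (∑ k, p k (e z).1 * ψ k (e z).2 * star (ψ k t)) * f (e.symm ((e z).1, t)) ∂ν)
    (hP : ∀ k f, ∀ᵐ z ∂M, P k f z =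
      ψ k (e z).2 * ∫ t, star (ψ k t) * f (e.symm ((e z).1, t)) ∂ν) (f : Lp 𝕜 2 M) :
    ∀ᵐ z ∂M, T f z = ∑ k, p k (e z).1 * P k f z := by
  have slice : ∀ᵐ z ∂M, MemLp (fun t => f (e.symm ((e z).1, t))) 2 ν :=
    ae_comp_fst_of_ae he.quasiMeasurePreserving <|
      ae_memLp_prodMk_left two_ne_zero ENNReal.ofNat_ne_top
        ((Lp.memLp f).comp_measurePreserving (he.symm e))
  filter_upwards [hT f, ae_all_iff.2 fun k => hP k f, slice] with z hTz hPz hz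
  simp_rw [hTz, integral_sum_mul_star_mul hψ hz, hPz, mul_assoc]

theorem partialProjection_partialIntegral_ae_eq [DecidableEq ι] [SFinite ν]
    (he : MeasurePreserving e M (μ.prod ν)) (hψ : ∀ k, MemLp (ψ k) 2 ν)
    (hON : ∀ i j, ∫ t, star (ψ i t) * ψ j t ∂ν = if i = j then 1 else 0)
    (hT : ∀ f, ∀ᵐ z ∂M, T f z = ∑ k, p k (e z).1 * P k f z)
    (hP : ∀ k f, ∀ᵐ z ∂M, P k f z =
      ψ k (e z).2 * ∫ t, star (ψ k t) * f (e.symm ((e z).1, t)) ∂ν) (j : ι) (f : Lp 𝕜 2 M) :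
    ∀ᵐ z ∂M, P j (T f) z = p j (e z).1 * P j f z := by
  let c : ι → X → 𝕜 := fun k x => p k x * ∫ t, star (ψ k t) * f (e.symm (x, t)) ∂ν
  have expansion : ∀ᵐ w ∂μ.prod ν, T f (e.symm w) = ∑ k, c k w.1 * ψ k w.2 := by
    filter_upwards [(he.symm e).quasiMeasurePreserving.ae (hT f),
      (he.symm e).quasiMeasurePreserving.ae (ae_all_iff.2 fun k => hP k f)] with w hTw hPw
    simp only [hTw, hPw, e.apply_symm_apply, c]
    exact Finset.sum_congr rfl fun k _ => by ring
  have coefficient : ∀ᵐ z ∂M,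
      ∫ t, star (ψ j t) * T f (e.symm ((e z).1, t)) ∂ν = c j (e z).1 := by
    refine ae_comp_fst_of_ae he.quasiMeasurePreserving (r := fun x =>
      ∫ t, star (ψ j t) * T f (e.symm (x, t)) ∂ν = c j x) ?_
    filter_upwards [Measure.ae_ae_of_ae_prod expansion] with x hx
    rw [← integral_star_mul_sum_of_orthonormal hψ hON (fun k => c k x) j]
    exact integral_congr_ae (hx.mono fun t ht => congrArg (star (ψ j t) * ·) ht)
  filter_upwards [hP j (T f), hP j f, coefficient] with z hPT hPf hz
  rw [hPT, hPf, hz, mul_left_comm]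

theorem resolvent_partialIntegral_eq_one_add_smul [DecidableEq ι] [SFinite ν]
    (he : MeasurePreserving e M (μ.prod ν)) (hψ : ∀ k, MemLp (ψ k) 2 ν)
    (hON : ∀ i j, ∫ t, star (ψ i t) * ψ j t ∂ν = if i = j then 1 else 0)
    (hT : ∀ f, ∀ᵐ z ∂M, T f z =
      ∫ t, (∑ k, p k (e z).1 * ψ k (e z).2 * star (ψ k t)) * f (e.symm ((e z).1, t)) ∂ν)
    (hP : ∀ k f, ∀ᵐ z ∂M, P k f z =
      ψ k (e z).2 * ∫ t, star (ψ k t) * f (e.symm ((e z).1, t)) ∂ν)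
    (hS : ∀ f, ∀ᵐ z ∂M, S f z = ∑ k, p k (e z).1 / (1 - τ * p k (e z).1) * P k f z)
    (hR : (1 - τ • T) * R = 1) : R = 1 + τ • S :=
  have hTP := partialIntegral_ae_eq_sum he hψ hT hP
  resolvent_eq_one_add_smul_of_diagonal (H := fun k z => p k (e z).1) hTP
    (partialProjection_partialIntegral_ae_eq he hψ hON hTP hP) hS hR

end PartialIntegralOperator

theorem statement8_general {𝕜 X Y ι κ : Type*} [RCLike 𝕜] [MeasurableSpace X] [MeasurableSpace Y]
    [Fintype ι] [DecidableEq ι] [Fintype κ] [DecidableEq κ]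
    {μ : Measure X} {ν : Measure Y} [SFinite μ] [SFinite ν]
    {φ : ι → X → 𝕜} (hφL2 : ∀ k, MemLp (φ k) 2 μ)
    (hφON : ∀ i j, ∫ x, star (φ i x) * φ j x ∂μ = if i = j then 1 else 0) (h : ι → Y → 𝕜)
    {ψ : κ → Y → 𝕜} (hψL2 : ∀ j, MemLp (ψ j) 2 ν)
    (hψON : ∀ i j, ∫ y, star (ψ i y) * ψ j y ∂ν = if i = j then 1 else 0) (p : κ → X → 𝕜)
    {T₁ T₂ : Lp 𝕜 2 (μ.prod ν) →L[𝕜] Lp 𝕜 2 (μ.prod ν)}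
    (hT₁ : ∀ f, ∀ᵐ z ∂μ.prod ν,
      T₁ f z = ∫ s, (∑ k, φ k z.1 * star (φ k s) * h k z.2) * f (s, z.2) ∂μ)
    (hT₂ : ∀ f, ∀ᵐ z ∂μ.prod ν,
      T₂ f z = ∫ t, (∑ j, p j z.1 * ψ j z.2 * star (ψ j t)) * f (z.1, t) ∂ν)
    {P : ι → Lp 𝕜 2 (μ.prod ν) →L[𝕜] Lp 𝕜 2 (μ.prod ν)}
    (hP : ∀ k f, ∀ᵐ z ∂μ.prod ν, P k f z = φ k z.1 * ∫ s, star (φ k s) * f (s, z.2) ∂μ)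
    {Q : κ → Lp 𝕜 2 (μ.prod ν) →L[𝕜] Lp 𝕜 2 (μ.prod ν)}
    (hQ : ∀ j f, ∀ᵐ z ∂μ.prod ν, Q j f z = ψ j z.2 * ∫ t, star (ψ j t) * f (z.1, t) ∂ν)
    {τ : 𝕜} {S₁ S₂ : Lp 𝕜 2 (μ.prod ν) →L[𝕜] Lp 𝕜 2 (μ.prod ν)}
    (hS₁ : ∀ f, ∀ᵐ z ∂μ.prod ν, S₁ f z = ∑ k, h k z.2 / (1 - τ * h k z.2) * P k f z)
    (hS₂ : ∀ f, ∀ᵐ z ∂μ.prod ν, S₂ f z = ∑ j, p j z.1 / (1 - τ * p j z.1) * Q j f z)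
    {R₁ R₂ : Lp 𝕜 2 (μ.prod ν) →L[𝕜] Lp 𝕜 2 (μ.prod ν)}
    (hR₁ : R₁ * (1 - τ • T₁) = 1 ∧ (1 - τ • T₁) * R₁ = 1)
    (hR₂ : R₂ * (1 - τ • T₂) = 1 ∧ (1 - τ • T₂) * R₂ = 1) (f : Lp 𝕜 2 (μ.prod ν)) :
    (f - τ • (T₁ + T₂) f = 0 ↔ f - τ ^ 2 • (R₂ * S₁ * T₂) f = 0) ∧
      (f - τ • (T₁ + T₂) f = 0 ↔ f - τ ^ 2 • (R₁ * S₂ * T₁) f = 0) := by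
  have hR₁S₁ : R₁ = 1 + τ • S₁ := by
    simp_rw [← mul_rotate (h _ _)] at hT₁
    exact resolvent_partialIntegral_eq_one_add_smul (e := MeasurableEquiv.prodComm)
      Measure.measurePreserving_swap hφL2 hφON hT₁ hP hS₁ hR₁.2
  have hR₂S₂ : R₂ = 1 + τ • S₂ :=
    resolvent_partialIntegral_eq_one_add_smul (e := MeasurableEquiv.refl _)
      (MeasurePreserving.id _) hψL2 hψON hT₂ hQ hS₂ hR₂.2
  exact ⟨sub_smul_add_apply_eq_zero_iff hR₁ hR₂ hR₁S₁ f,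
    add_comm T₂ T₁ ▸ sub_smul_add_apply_eq_zero_iff hR₂ hR₁ hR₂S₂ f⟩

theorem statement8
    (a b c d : ℝ) (hab : a < b) (hcd : c < d)
    (n : ℕ) (hn : 1 ≤ n)
    (φ : Fin n → ℝ → ℂ)
    (hφL2 : ∀ k, MemLp (φ k) 2 (muI a b))
    (hφON : ∀ i j, ∫ x, star (φ i x) * φ j x ∂(muI a b) = if i = j then 1 else 0)
    (h : Fin n → ℝ → ℝ)
    (hhmeas : ∀ k, Measurable (h k))
    (hhbdd : ∀ k, ∃ C : ℝ, ∀ᵐ y ∂(muI c d), |h k y| ≤ C)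
    (m : ℕ) (hm : 1 ≤ m)
    (ψ : Fin m → ℝ → ℂ)
    (hψL2 : ∀ j, MemLp (ψ j) 2 (muI c d))
    (hψON : ∀ i j, ∫ y, star (ψ i y) * ψ j y ∂(muI c d) = if i = j then 1 else 0)
    (p : Fin m → ℝ → ℝ)
    (hpmeas : ∀ j, Measurable (p j))
    (hpbdd : ∀ j, ∃ C : ℝ, ∀ᵐ x ∂(muI a b), |p j x| ≤ C)
    (T1 T2 : Lp ℂ 2 ((muI a b).prod (muI c d)) →L[ℂ] Lp ℂ 2 ((muI a b).prod (muI c d)))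
    (hT1sa : IsSelfAdjoint T1) (hT2sa : IsSelfAdjoint T2)
    (hT1 : ∀ f : Lp ℂ 2 ((muI a b).prod (muI c d)),
      ∀ᵐ z ∂((muI a b).prod (muI c d)),
        T1 f z = ∫ s, (∑ k, φ k z.1 * star (φ k s) * (h k z.2 : ℂ)) * f (s, z.2) ∂(muI a b))
    (hT2 : ∀ f : Lp ℂ 2 ((muI a b).prod (muI c d)),
      ∀ᵐ z ∂((muI a b).prod (muI c d)),
        T2 f z = ∫ t, (∑ j, (p j z.1 : ℂ) * ψ j z.2 * star (ψ j t)) * f (z.1, t) ∂(muI c d))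
    -- the orthogonal projections `P k` and `Q j`
    (P : Fin n → (Lp ℂ 2 ((muI a b).prod (muI c d)) →L[ℂ] Lp ℂ 2 ((muI a b).prod (muI c d))))
    (hP : ∀ k, ∀ f : Lp ℂ 2 ((muI a b).prod (muI c d)),
      ∀ᵐ z ∂((muI a b).prod (muI c d)),
        P k f z = φ k z.1 * ∫ s, star (φ k s) * f (s, z.2) ∂(muI a b))
    (Q : Fin m → (Lp ℂ 2 ((muI a b).prod (muI c d)) →L[ℂ] Lp ℂ 2 ((muI a b).prod (muI c d))))
    (hQ : ∀ j, ∀ f : Lp ℂ 2 ((muI a b).prod (muI c d)),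
      ∀ᵐ z ∂((muI a b).prod (muI c d)),
        Q j f z = ψ j z.2 * ∫ t, star (ψ j t) * f (z.1, t) ∂(muI c d))
    -- the parameter τ
    (τ : ℂ) (hτ0 : τ ≠ 0)
    (hτ1 : τ⁻¹ ∈ resolventSet ℂ T1) (hτ2 : τ⁻¹ ∈ resolventSet ℂ T2)
    -- the operators S₁(τ) and S₂(τ)
    (S1 S2 : Lp ℂ 2 ((muI a b).prod (muI c d)) →L[ℂ] Lp ℂ 2 ((muI a b).prod (muI c d)))
    (hS1 : ∀ f : Lp ℂ 2 ((muI a b).prod (muI c d)),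
      ∀ᵐ z ∂((muI a b).prod (muI c d)),
        S1 f z = ∑ k, ((h k z.2 : ℂ) / (1 - τ * (h k z.2 : ℂ))) * P k f z)
    (hS2 : ∀ f : Lp ℂ 2 ((muI a b).prod (muI c d)),
      ∀ᵐ z ∂((muI a b).prod (muI c d)),
        S2 f z = ∑ i, ((p i z.1 : ℂ) / (1 - τ * (p i z.1 : ℂ))) * Q i f z)
    -- the (two-sided) inverses of `E - τT₁` and `E - τT₂`
    (R1 R2 : Lp ℂ 2 ((muI a b).prod (muI c d)) →L[ℂ] Lp ℂ 2 ((muI a b).prod (muI c d)))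
    (hR1 : R1 * (1 - τ • T1) = 1 ∧ (1 - τ • T1) * R1 = 1)
    (hR2 : R2 * (1 - τ • T2) = 1 ∧ (1 - τ • T2) * R2 = 1)
    -- the operators W₁(τ) = (E-τT₂)⁻¹ S₁(τ) T₂ and W₂(τ) = (E-τT₁)⁻¹ S₂(τ) T₁
    (W1 W2 : Lp ℂ 2 ((muI a b).prod (muI c d)) →L[ℂ] Lp ℂ 2 ((muI a b).prod (muI c d)))
    (hW1 : W1 = R2 * S1 * T2) (hW2 : W2 = R1 * S2 * T1) :
    ∀ f : Lp ℂ 2 ((muI a b).prod (muI c d)),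
      (f - τ • (T1 + T2) f = 0 ↔ f - τ ^ 2 • W1 f = 0) ∧
      (f - τ • (T1 + T2) f = 0 ↔ f - τ ^ 2 • W2 f = 0) := by
  subst hW1 hW2
  exact statement8_general hφL2 hφON (fun k y => (h k y : ℂ)) hψL2 hψON (fun j x => (p j x : ℂ))
    hT1 hT2 hP hQ hS1 hS2 hR1 hR2
end
end

section
/- Let τ ∈ R(T) ∪ D(T). The homogeneous partial integral equation f − τ(T₁+T₂)f = 0 has a nontrivial solution f ∈ H, f ≠ 0, if and only if τ ∈ D(T). -/
/-!
Fix `τ` and write `S = S₁(τ)`, `W = W₁(τ)`. The functions `φ k` are orthonormal in the variable `x`,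
so operators with kernel `∑ k, φ k x * star (φ k s) * h k y` compose by multiplying their symbols
`h k`; comparing symbols gives `S = T₁ + τ S T₁`, that is, `1 + τ S = (1 - τ T₁)⁻¹`. Together with
`(1 - τ T₂) W = S T₂` this yields the factorization
`(1 + τ S) (1 - τ (T₁ + T₂)) = (1 - τ T₂) (1 - τ² W)`, in which both left factors are invertible, so
`1 - τ (T₁ + T₂)` and `1 - τ² W` have the same kernel. The symbol `h k / (1 - τ h k)` of `S` is
almost nowhere a division by zero: if `h k = τ⁻¹` on a set `B` of positive finite measure, then
`φ k x * 1_B y` is an eigenvector of `T₁` at `τ⁻¹`.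
-/

open MeasureTheory Complex

noncomputable section

section Ring

variable {R A M : Type*} [Ring A] [AddCommGroup M] [Module A M]

theorem smul_eq_zero_iff_of_isUnit_mul_eq {u v a b : A} {x : M} (hu : IsUnit u) (hv : IsUnit v)
    (huv : u * a = v * b) : a • x = 0 ↔ b • x = 0 := by
  rw [← hu.smul_eq_zero, ← mul_smul, huv, mul_smul, hv.smul_eq_zero]

theorem eq_zero_of_smul_eq_algebraMap_smul_of_mem_resolventSet [CommRing R] [Algebra R A] {r : R}
    {a : A} {x : M} (hr : r ∈ resolventSet R a) (hx : a • x = algebraMap R A r • x) : x = 0 := by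
  refine (spectrum.mem_resolventSet_iff.1 hr).smul_eq_zero.1 ?_
  rw [sub_smul, hx, sub_self]

theorem isUnit_one_sub_smul_of_inv_mem_resolventSet [Field R] [Algebra R A] {τ : R} {a : A}
    (hτ : τ ≠ 0) (ha : τ⁻¹ ∈ resolventSet R a) : IsUnit (1 - τ • a) := by
  have := (spectrum.mem_resolventSet_iff.1 ha).smul (Units.mk0 τ hτ)
  rwa [Units.smul_mk0, smul_sub, Algebra.algebraMap_eq_smul_one, smul_inv_smul₀ hτ] at this

theorem one_add_smul_mul_one_sub_smul [CommRing R] [Algebra R A] {τ : R} {S T : A}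
    (hS : S = T + τ • (S * T)) : (1 + τ • S) * (1 - τ • T) = 1 := by
  have hτS : τ • S = τ • T + (τ • S) * (τ • T) := by
    rw [smul_mul_smul_comm, mul_smul, ← smul_add, ← hS]
  rw [mul_sub, mul_one, add_mul, one_mul, ← hτS, add_sub_cancel_right]

theorem one_add_smul_mul_one_sub_smul_add [CommRing R] [Algebra R A] {τ : R} {S T₁ T₂ W : A}
    (hS : S = T₁ + τ • (S * T₁)) (hW : (1 - τ • T₂) * W = S * T₂) :
    (1 + τ • S) * (1 - τ • (T₁ + T₂)) = (1 - τ • T₂) * (1 - τ ^ 2 • W) :=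
  calc (1 + τ • S) * (1 - τ • (T₁ + T₂))
      = (1 + τ • S) * (1 - τ • T₁) - (1 + τ • S) * τ • T₂ := by
        rw [smul_add, ← sub_sub, mul_sub]
    _ = 1 - τ • T₂ - τ ^ 2 • (S * T₂) := by
        rw [one_add_smul_mul_one_sub_smul hS, add_mul, one_mul, smul_mul_smul_comm, ← pow_two,
          sub_sub]
    _ = (1 - τ • T₂) * (1 - τ ^ 2 • W) := by
        rw [← hW, mul_sub, mul_one, mul_smul_comm]

theorem one_sub_smul_add_smul_eq_zero_iff [Field R] [Algebra R A] {τ : R} {S T₁ T₂ W : A} {x : M}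
    (hτ : τ ≠ 0) (hT₁ : τ⁻¹ ∈ resolventSet R T₁) (hT₂ : τ⁻¹ ∈ resolventSet R T₂)
    (hS : S = T₁ + τ • (S * T₁)) (hW : (1 - τ • T₂) * W = S * T₂) :
    (1 - τ • (T₁ + T₂)) • x = 0 ↔ (1 - τ ^ 2 • W) • x = 0 := by
  have hu₁ : IsUnit (1 - τ • T₁) := isUnit_one_sub_smul_of_inv_mem_resolventSet hτ hT₁
  have hu₂ : IsUnit (1 - τ • T₂) := isUnit_one_sub_smul_of_inv_mem_resolventSet hτ hT₂
  have huS : IsUnit (1 + τ • S) := by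
    rw [← Units.isUnit_mul_units _ hu₁.unit, hu₁.unit_spec, one_add_smul_mul_one_sub_smul hS]
    exact isUnit_one
  exact smul_eq_zero_iff_of_isUnit_mul_eq huS hu₂ (one_add_smul_mul_one_sub_smul_add hS hW)

end Ring

section Product

open scoped ENNReal

variable {X Y : Type*} [MeasurableSpace X] [MeasurableSpace Y] {μ : Measure X} {ν : Measure Y}

theorem memLp_fst_mul_snd {R : Type*} [NormedRing R] [NormMulClass R] {p : ℝ≥0∞} {u : X → R}
    {v : Y → R} (hp : p ≠ 0) (hp' : p ≠ ∞) (hu : MemLp u p μ) (hv : MemLp v p ν) :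
    MemLp (fun z : X × Y => u z.1 * v z.2) p (μ.prod ν) := by
  have hmeas : AEStronglyMeasurable (fun z : X × Y => u z.1 * v z.2) (μ.prod ν) :=
    hu.1.comp_fst.mul hv.1.comp_snd
  refine (integrable_norm_rpow_iff hmeas hp hp').1 ?_
  simp only [norm_mul, Real.mul_rpow (norm_nonneg _) (norm_nonneg _)]
  exact (hu.integrable_norm_rpow hp hp').mul_prod (hv.integrable_norm_rpow hp hp')

variable [SFinite μ] [SFinite ν]

theorem ae_ae_of_ae_prod_right {Q : X × Y → Prop} (hQ : ∀ᵐ z ∂(μ.prod ν), Q z) :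
    ∀ᵐ y ∂ν, ∀ᵐ x ∂μ, Q (x, y) :=
  Measure.ae_ae_of_ae_prod (Measure.measurePreserving_swap.quasiMeasurePreserving.ae hQ)

theorem ae_memLp_prodMk_right {E : Type*} [NormedAddCommGroup E] {p : ℝ≥0∞} {f : X × Y → E}
    (hp : p ≠ 0) (hp' : p ≠ ∞) (hf : MemLp f p (μ.prod ν)) :
    ∀ᵐ y ∂ν, MemLp (fun x => f (x, y)) p μ := by
  filter_upwards [(hf.integrable_norm_rpow hp hp').prod_left_ae, hf.1.prod_swap.prodMk_left]
    with y hint hmeas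
  exact (integrable_norm_rpow_iff hmeas hp hp').1 hint

end Product

section PartialIntegral

variable {𝕜 X Y ι : Type*} [RCLike 𝕜] [MeasurableSpace X] {μ : Measure X}

/-- The coefficient of `f(·, y)` along `u`, that is, the inner product of `u` with `f(·, y)` in
`L²(μ)`, as a function of `y`. -/
def partialCoeff (μ : Measure X) (u : X → 𝕜) (f : X × Y → 𝕜) (y : Y) : 𝕜 :=
  ∫ s, star (u s) * f (s, y) ∂μ

theorem partialCoeff_fst_mul_snd (u v : X → 𝕜) (g : Y → 𝕜) (y : Y) :
    partialCoeff μ u (fun z => v z.1 * g z.2) y = (∫ s, star (u s) * v s ∂μ) * g y := by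
  simp only [partialCoeff, ← mul_assoc, integral_mul_const]

theorem partialCoeff_sum_fst_mul_snd [Fintype ι] [DecidableEq ι] {φ : ι → X → 𝕜}
    (hφL2 : ∀ k, MemLp (φ k) 2 μ)
    (hφON : ∀ i j, ∫ x, star (φ i x) * φ j x ∂μ = if i = j then 1 else 0)
    (g : ι → Y → 𝕜) (k : ι) (y : Y) :
    partialCoeff μ (φ k) (fun z => ∑ j, φ j z.1 * g j z.2) y = g k y := by
  have hint (j : ι) : Integrable (fun s => star (φ k s) * φ j s * g j y) μ :=
    ((hφL2 k).star.integrable_mul (hφL2 j)).mul_const _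
  simp only [partialCoeff, Finset.mul_sum, ← mul_assoc]
  rw [integral_finsetSum _ fun j _ => hint j]
  simp only [integral_mul_const, hφON, ite_mul, one_mul, zero_mul, Finset.sum_ite_eq,
    Finset.mem_univ, if_true]

variable [MeasurableSpace Y] {ν : Measure Y}

theorem partialCoeff_congr_ae [SFinite μ] [SFinite ν] (u : X → 𝕜) {f g : X × Y → 𝕜}
    (hfg : f =ᵐ[μ.prod ν] g) :
    partialCoeff μ u f =ᵐ[ν] partialCoeff μ u g := by
  filter_upwards [ae_ae_of_ae_prod_right hfg] with y hy
  refine integral_congr_ae ?_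
  filter_upwards [hy] with s hs
  rw [hs]

variable [Fintype ι]

/-- `T` is the partial integral operator with kernel `∑ k, φ k x * star (φ k s) * h k y`: it
multiplies the coefficient of `f(·, y)` along `φ k` by the symbol `h k y`. -/
def IsPartialIntegral (φ : ι → X → 𝕜) (h : ι → Y → 𝕜)
    (T : Lp 𝕜 2 (μ.prod ν) →L[𝕜] Lp 𝕜 2 (μ.prod ν)) : Prop :=
  ∀ f : Lp 𝕜 2 (μ.prod ν),
    T f =ᵐ[μ.prod ν] fun z => ∑ k, φ k z.1 * (h k z.2 * partialCoeff μ (φ k) f z.2)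

namespace IsPartialIntegral

variable {φ : ι → X → 𝕜} {g h : ι → Y → 𝕜} {S T : Lp 𝕜 2 (μ.prod ν) →L[𝕜] Lp 𝕜 2 (μ.prod ν)}

theorem ext_ae (hS : IsPartialIntegral φ g S) (hT : IsPartialIntegral φ h T)
    (hgh : ∀ k, g k =ᵐ[ν] h k) : S = T := by
  ext1 f
  refine Lp.ext ?_
  filter_upwards [hS f, hT f,
    Measure.quasiMeasurePreserving_snd.ae (ae_all_iff.2 hgh)] with z hSz hTz hz
  simp only [hSz, hTz, hz]

theorem add (hS : IsPartialIntegral φ g S) (hT : IsPartialIntegral φ h T) :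
    IsPartialIntegral φ (g + h) (S + T) := by
  intro f
  filter_upwards [hS f, hT f, Lp.coeFn_add (S f) (T f)] with z hSz hTz hz
  simp only [add_apply, hz, Pi.add_apply, hSz, hTz, add_mul, mul_add,
    Finset.sum_add_distrib]

theorem const_smul (c : 𝕜) (hT : IsPartialIntegral φ h T) :
    IsPartialIntegral φ (c • h) (c • T) := by
  intro f
  filter_upwards [hT f, Lp.coeFn_smul c (T f)] with z hTz hz
  simp only [smul_apply, hz, Pi.smul_apply, hTz, smul_eq_mul, Finset.mul_sum]
  exact Finset.sum_congr rfl fun k _ => by ring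

variable [SFinite μ] [SFinite ν]

theorem of_kernel (hφL2 : ∀ k, MemLp (φ k) 2 μ)
    (hT : ∀ f : Lp 𝕜 2 (μ.prod ν), ∀ᵐ z ∂(μ.prod ν),
      T f z = ∫ s, (∑ k, φ k z.1 * star (φ k s) * h k z.2) * f (s, z.2) ∂μ) :
    IsPartialIntegral φ h T := by
  intro f
  have hslice : ∀ᵐ y ∂ν, MemLp (fun s => f (s, y)) 2 μ :=
    ae_memLp_prodMk_right two_ne_zero ENNReal.ofNat_ne_top (Lp.memLp f)
  filter_upwards [hT f, Measure.quasiMeasurePreserving_snd.ae hslice] with z hz hfz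
  have hint (k : ι) :
      Integrable (fun s => φ k z.1 * (h k z.2 * (star (φ k s) * f (s, z.2)))) μ :=
    (((hφL2 k).star.integrable_mul hfz).const_mul _).const_mul _
  calc T f z
      = ∫ s, ∑ k, φ k z.1 * (h k z.2 * (star (φ k s) * f (s, z.2))) ∂μ := by
        rw [hz]
        congr! 2 with s
        rw [Finset.sum_mul]
        exact Finset.sum_congr rfl fun k _ => by ring
    _ = ∑ k, φ k z.1 * (h k z.2 * partialCoeff μ (φ k) f z.2) := by
        rw [integral_finsetSum _ fun k _ => hint k]
        simp only [integral_const_mul, partialCoeff]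

section Orthonormal

variable [DecidableEq ι]

theorem partialCoeff_apply (hφL2 : ∀ k, MemLp (φ k) 2 μ)
    (hφON : ∀ i j, ∫ x, star (φ i x) * φ j x ∂μ = if i = j then 1 else 0)
    (hT : IsPartialIntegral φ h T) (f : Lp 𝕜 2 (μ.prod ν)) (k : ι) :
    partialCoeff μ (φ k) (T f) =ᵐ[ν] fun y => h k y * partialCoeff μ (φ k) f y := by
  filter_upwards [partialCoeff_congr_ae (φ k) (hT f)] with y hy
  rw [hy, partialCoeff_sum_fst_mul_snd hφL2 hφON fun j y => h j y * partialCoeff μ (φ j) f y]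

theorem mul (hφL2 : ∀ k, MemLp (φ k) 2 μ)
    (hφON : ∀ i j, ∫ x, star (φ i x) * φ j x ∂μ = if i = j then 1 else 0)
    (hS : IsPartialIntegral φ g S) (hT : IsPartialIntegral φ h T) :
    IsPartialIntegral φ (g * h) (S * T) := by
  intro f
  have hcoeff := ae_all_iff.2 (hT.partialCoeff_apply hφL2 hφON f)
  filter_upwards [hS (T f), Measure.quasiMeasurePreserving_snd.ae hcoeff] with z hz hcz
  simp only [mul_apply_eq_comp, hz, hcz, Pi.mul_apply, mul_assoc]

theorem apply_fst_mul_snd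
    (hφON : ∀ i j, ∫ x, star (φ i x) * φ j x ∂μ = if i = j then 1 else 0)
    (hT : IsPartialIntegral φ h T) {f : Lp 𝕜 2 (μ.prod ν)} {k : ι} {χ : Y → 𝕜}
    (hf : f =ᵐ[μ.prod ν] fun z => φ k z.1 * χ z.2) :
    T f =ᵐ[μ.prod ν] fun z => φ k z.1 * (h k z.2 * χ z.2) := by
  have hcoeff (j : ι) : partialCoeff μ (φ j) f =ᵐ[ν] fun y => if j = k then χ y else 0 := by
    filter_upwards [partialCoeff_congr_ae (φ j) hf] with y hy
    rw [hy, partialCoeff_fst_mul_snd, hφON, ite_mul, one_mul, zero_mul]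
  filter_upwards [hT f,
    Measure.quasiMeasurePreserving_snd.ae (ae_all_iff.2 hcoeff)] with z hz hcz
  simp only [hz, hcz, mul_ite, mul_zero, Finset.sum_ite_eq', Finset.mem_univ, if_true]

theorem measure_eq_zero_of_mem_resolventSet (hφL2 : ∀ k, MemLp (φ k) 2 μ)
    (hφON : ∀ i j, ∫ x, star (φ i x) * φ j x ∂μ = if i = j then 1 else 0)
    (hT : IsPartialIntegral φ h T) {r : 𝕜} (hr : r ∈ resolventSet 𝕜 T) {k : ι} {B : Set Y}
    (hB : MeasurableSet B) (hνB : ν B ≠ ⊤) (hBr : ∀ y ∈ B, h k y = r) : ν B = 0 := by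
  let χ : Y → 𝕜 := B.indicator fun _ => 1
  have hχ : MemLp χ 2 ν := memLp_indicator_const 2 hB 1 (Or.inr hνB)
  have hφχ := memLp_fst_mul_snd two_ne_zero ENNReal.ofNat_ne_top (hφL2 k) hχ
  let f : Lp 𝕜 2 (μ.prod ν) := hφχ.toLp _
  have hf : f =ᵐ[μ.prod ν] fun z => φ k z.1 * χ z.2 := hφχ.coeFn_toLp
  have hχr (y : Y) : h k y * χ y = r * χ y := by
    by_cases hy : y ∈ B
    · rw [hBr y hy]
    · simp only [χ, Set.indicator_of_notMem hy, mul_zero]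
  have hTf : T f = r • f := by
    refine Lp.ext ?_
    filter_upwards [hT.apply_fst_mul_snd hφON hf, hf, Lp.coeFn_smul r f] with z hTz hfz hz
    rw [hTz, hz, Pi.smul_apply, hfz, hχr, smul_eq_mul, mul_left_comm]
  have hf0 : f = 0 := eq_zero_of_smul_eq_algebraMap_smul_of_mem_resolventSet hr hTf
  have hφχ0 : (fun z => φ k z.1 * χ z.2) =ᵐ[μ.prod ν] 0 :=
    hf.symm.trans (hf0 ▸ Lp.coeFn_zero _ _ _)
  refine measure_eq_zero_iff_ae_notMem.2 ?_
  filter_upwards [partialCoeff_congr_ae (φ k) hφχ0] with y hy hyB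
  rw [partialCoeff_fst_mul_snd, hφON] at hy
  simp [χ, hyB, partialCoeff] at hy

end Orthonormal

end IsPartialIntegral

end PartialIntegral

section SigmaFinite

variable {𝕜 X Y ι : Type*} [RCLike 𝕜] [MeasurableSpace X] [MeasurableSpace Y]
  {μ : Measure X} {ν : Measure Y} [SFinite μ] [SigmaFinite ν] [Fintype ι] [DecidableEq ι]
  {φ : ι → X → 𝕜} {h : ι → Y → 𝕜} {S T : Lp 𝕜 2 (μ.prod ν) →L[𝕜] Lp 𝕜 2 (μ.prod ν)}

theorem IsPartialIntegral.ae_ne_of_mem_resolventSet (hφL2 : ∀ k, MemLp (φ k) 2 μ)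
    (hφON : ∀ i j, ∫ x, star (φ i x) * φ j x ∂μ = if i = j then 1 else 0)
    (hT : IsPartialIntegral φ h T) {k : ι} (hh : AEMeasurable (h k) ν) {r : 𝕜}
    (hr : r ∈ resolventSet 𝕜 T) : ∀ᵐ y ∂ν, h k y ≠ r := by
  have hlevel : NullMeasurableSet {y | h k y = r} ν :=
    hh.nullMeasurableSet_preimage (measurableSet_singleton r)
  obtain ⟨A, hAr, hA, hAae⟩ := hlevel.exists_measurable_subset_ae_eq
  have hνA : ν A = 0 := by
    by_contra hpos
    obtain ⟨B, hB, hBA, hνB, hνB'⟩ :=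
      Measure.exists_subset_measure_lt_top hA (pos_iff_ne_zero.2 hpos)
    exact hνB.ne' (hT.measure_eq_zero_of_mem_resolventSet hφL2 hφON hr hB hνB'.ne
      fun y hy => hAr (hBA hy))
  rw [measure_congr hAae] at hνA
  exact measure_eq_zero_iff_ae_notMem.1 hνA

theorem IsPartialIntegral.eq_add_smul_mul (hφL2 : ∀ k, MemLp (φ k) 2 μ)
    (hφON : ∀ i j, ∫ x, star (φ i x) * φ j x ∂μ = if i = j then 1 else 0)
    (hh : ∀ k, AEMeasurable (h k) ν) {τ : 𝕜} (hτT : τ⁻¹ ∈ resolventSet 𝕜 T)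
    (hT : IsPartialIntegral φ h T)
    (hS : IsPartialIntegral φ (fun k y => h k y / (1 - τ * h k y)) S) :
    S = T + τ • (S * T) := by
  refine hS.ext_ae (hT.add ((hS.mul hφL2 hφON hT).const_smul τ)) fun k => ?_
  filter_upwards [hT.ae_ne_of_mem_resolventSet hφL2 hφON (hh k) hτT] with y hy
  have hden : 1 - τ * h k y ≠ 0 :=
    sub_ne_zero.2 fun heq => hy (eq_inv_of_mul_eq_one_right heq.symm)
  simp only [Pi.add_apply, Pi.smul_apply, Pi.mul_apply, smul_eq_mul]
  linear_combination div_mul_cancel₀ (h k y) hden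

theorem statement9_general
    (hφL2 : ∀ k, MemLp (φ k) 2 μ)
    (hφON : ∀ i j, ∫ x, star (φ i x) * φ j x ∂μ = if i = j then 1 else 0)
    (hh : ∀ k, AEMeasurable (h k) ν)
    {T₁ T₂ : Lp 𝕜 2 (μ.prod ν) →L[𝕜] Lp 𝕜 2 (μ.prod ν)}
    (hT₁ : ∀ f : Lp 𝕜 2 (μ.prod ν), ∀ᵐ z ∂(μ.prod ν),
      T₁ f z = ∫ s, (∑ k, φ k z.1 * star (φ k s) * h k z.2) * f (s, z.2) ∂μ)
    {P : ι → Lp 𝕜 2 (μ.prod ν) →L[𝕜] Lp 𝕜 2 (μ.prod ν)}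
    (hP : ∀ k, ∀ f : Lp 𝕜 2 (μ.prod ν), ∀ᵐ z ∂(μ.prod ν),
      P k f z = φ k z.1 * ∫ s, star (φ k s) * f (s, z.2) ∂μ)
    {τ : 𝕜} (hτ : τ ≠ 0) (hτ₁ : τ⁻¹ ∈ resolventSet 𝕜 T₁) (hτ₂ : τ⁻¹ ∈ resolventSet 𝕜 T₂)
    {S W : Lp 𝕜 2 (μ.prod ν) →L[𝕜] Lp 𝕜 2 (μ.prod ν)}
    (hS : ∀ f : Lp 𝕜 2 (μ.prod ν), ∀ᵐ z ∂(μ.prod ν),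
      S f z = ∑ k, (h k z.2 / (1 - τ * h k z.2)) * P k f z)
    (hW : (1 - τ • T₂) * W = S * T₂) :
    (∃ f : Lp 𝕜 2 (μ.prod ν), f ≠ 0 ∧ f - τ • (T₁ + T₂) f = 0) ↔
      ∃ g : Lp 𝕜 2 (μ.prod ν), g ≠ 0 ∧ (τ ^ 2 • W) g = g := by
  have hS' : IsPartialIntegral φ (fun k y => h k y / (1 - τ * h k y)) S := by
    intro f
    filter_upwards [hS f, ae_all_iff.2 fun k => hP k f] with z hSz hPz
    simp only [hSz, hPz, partialCoeff, mul_left_comm]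
  have hST : S = T₁ + τ • (S * T₁) :=
    (IsPartialIntegral.of_kernel hφL2 hT₁).eq_add_smul_mul hφL2 hφON hh hτ₁ hS'
  refine exists_congr fun f => and_congr_right fun _ => ?_
  rw [eq_comm (b := f), ← sub_eq_zero (a := f)]
  exact one_sub_smul_add_smul_eq_zero_iff hτ hτ₁ hτ₂ hST hW

end SigmaFinite

theorem statement9
    (a b c d : ℝ) (hab : a < b) (hcd : c < d)
    (n : ℕ) (hn : 1 ≤ n)
    (φ : Fin n → ℝ → ℂ)
    (hφL2 : ∀ k, MemLp (φ k) 2 (muI a b))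
    (hφON : ∀ i j, ∫ x, star (φ i x) * φ j x ∂(muI a b) = if i = j then 1 else 0)
    (h : Fin n → ℝ → ℝ)
    (hhmeas : ∀ k, Measurable (h k))
    (hhbdd : ∀ k, ∃ C : ℝ, ∀ᵐ y ∂(muI c d), |h k y| ≤ C)
    (m : ℕ) (hm : 1 ≤ m)
    (ψ : Fin m → ℝ → ℂ)
    (hψL2 : ∀ j, MemLp (ψ j) 2 (muI c d))
    (hψON : ∀ i j, ∫ y, star (ψ i y) * ψ j y ∂(muI c d) = if i = j then 1 else 0)
    (p : Fin m → ℝ → ℝ)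
    (hpmeas : ∀ j, Measurable (p j))
    (hpbdd : ∀ j, ∃ C : ℝ, ∀ᵐ x ∂(muI a b), |p j x| ≤ C)
    (T1 T2 : Lp ℂ 2 ((muI a b).prod (muI c d)) →L[ℂ] Lp ℂ 2 ((muI a b).prod (muI c d)))
    (hT1sa : IsSelfAdjoint T1) (hT2sa : IsSelfAdjoint T2)
    (hT1 : ∀ f : Lp ℂ 2 ((muI a b).prod (muI c d)),
      ∀ᵐ z ∂((muI a b).prod (muI c d)),
        T1 f z = ∫ s, (∑ k, φ k z.1 * star (φ k s) * (h k z.2 : ℂ)) * f (s, z.2) ∂(muI a b))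
    (hT2 : ∀ f : Lp ℂ 2 ((muI a b).prod (muI c d)),
      ∀ᵐ z ∂((muI a b).prod (muI c d)),
        T2 f z = ∫ t, (∑ j, (p j z.1 : ℂ) * ψ j z.2 * star (ψ j t)) * f (z.1, t) ∂(muI c d))
    -- the orthogonal projections `P k`
    (P : Fin n → (Lp ℂ 2 ((muI a b).prod (muI c d)) →L[ℂ] Lp ℂ 2 ((muI a b).prod (muI c d))))
    (hP : ∀ k, ∀ f : Lp ℂ 2 ((muI a b).prod (muI c d)),
      ∀ᵐ z ∂((muI a b).prod (muI c d)),
        P k f z = φ k z.1 * ∫ s, star (φ k s) * f (s, z.2) ∂(muI a b))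
    -- the operators S₁(τ)
    (S1 : ℂ → (Lp ℂ 2 ((muI a b).prod (muI c d)) →L[ℂ] Lp ℂ 2 ((muI a b).prod (muI c d))))
    (hS1 : ∀ τ : ℂ, τ ≠ 0 → τ⁻¹ ∈ resolventSet ℂ T1 → τ⁻¹ ∈ resolventSet ℂ T2 →
      ∀ f : Lp ℂ 2 ((muI a b).prod (muI c d)),
        ∀ᵐ z ∂((muI a b).prod (muI c d)),
          S1 τ f z = ∑ k, ((h k z.2 : ℂ) / (1 - τ * (h k z.2 : ℂ))) * P k f z)
    -- the operators W₁(τ) = (E-τT₂)⁻¹ S₁(τ) T₂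
    (W1 : ℂ → (Lp ℂ 2 ((muI a b).prod (muI c d)) →L[ℂ] Lp ℂ 2 ((muI a b).prod (muI c d))))
    (hW1 : ∀ τ : ℂ, τ ≠ 0 → τ⁻¹ ∈ resolventSet ℂ T1 → τ⁻¹ ∈ resolventSet ℂ T2 →
      (1 - τ • T2) * W1 τ = S1 τ * T2)
    -- the sets D(T) and R(T)
    (DT RT : Set ℂ)
    (hDT : DT = {τ : ℂ | τ ≠ 0 ∧ τ⁻¹ ∈ resolventSet ℂ T1 ∧ τ⁻¹ ∈ resolventSet ℂ T2 ∧
      ∃ g : Lp ℂ 2 ((muI a b).prod (muI c d)), g ≠ 0 ∧ (τ ^ 2 • W1 τ) g = g})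
    (hRT : RT = {τ : ℂ | τ ≠ 0 ∧ τ⁻¹ ∈ resolventSet ℂ T1 ∧ τ⁻¹ ∈ resolventSet ℂ T2 ∧
      ¬ ∃ g : Lp ℂ 2 ((muI a b).prod (muI c d)), g ≠ 0 ∧ (τ ^ 2 • W1 τ) g = g}) :
    ∀ τ ∈ RT ∪ DT,
      ((∃ f : Lp ℂ 2 ((muI a b).prod (muI c d)), f ≠ 0 ∧ f - τ • (T1 + T2) f = 0) ↔
        τ ∈ DT) := by
  subst hDT hRT
  rintro τ (⟨h0, h1, h2, -⟩ | ⟨h0, h1, h2, -⟩) <;>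
    exact (statement9_general hφL2 hφON (fun k => (hhmeas k).complex_ofReal.aemeasurable)
      hT1 hP h0 h1 h2 (hS1 τ h0 h1 h2) (hW1 τ h0 h1 h2)).trans
        ⟨fun hg => ⟨h0, h1, h2, hg⟩, fun hτ => hτ.2.2.2⟩
end
end

section
/- For every λ ∈ ℂ \ (σ(T₁) ∪ σ(T₂) ∪ D₀(T)), the operator T₁ + T₂ − λE is invertible on H with bounded inverse R_λ(T), and R_λ(T) = −(1/λ)·(E − (1/λ²)W₁(1/λ))⁻¹ · (E − (1/λ)T₂)⁻¹ · (E − (1/λ)T₁)⁻¹. -/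
open MeasureTheory Complex

noncomputable section

/-!
An operator `T₁ = ∑ k, h k(y) • P k` whose `P k` are pairwise orthogonal projections is governed by
its symbol `h`: products act on symbols pointwise, and if `λ` is in the resolvent set of `T₁` then
every `h k` avoids `λ` almost everywhere, for otherwise `φ k(x) v(y)` with `v` supported on
`{h k = λ}` would be an eigenvector. For `τ = λ⁻¹` this gives `(1 - τ T₁) S₁(τ) = T₁`, hence
`1 - τ T₁ - τ T₂ = (1 - τ T₁) (1 - τ T₂) (1 - τ² W₁(τ))`. Since `T₁ T₂` has finite rank, `W₁(τ)` is
compact, and by the Fredholm alternative the last factor is invertible as soon as it is injective.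
Dividing by `λ` is harmless: `L²([a, b])` is infinite-dimensional, so some nonzero `w` is orthogonal
to every `φ k`, and `T₁` kills `w(x) v(y)`; hence `0` is in the spectrum of `T₁`.
-/

section FactoredResolvent

lemma one_sub_smul_mul_one_sub_smul_mul {R A : Type*} [CommRing R] [Ring A] [Algebra R A]
    {τ : R} {T₁ T₂ S W : A} (hS : (1 - τ • T₁) * S = T₁) (hW : (1 - τ • T₂) * W = S * T₂) :
    (1 - τ • T₁) * (1 - τ • T₂) * W = T₁ * T₂ := by
  rw [mul_assoc, hW, ← mul_assoc, hS]

lemma one_sub_smul_sub_smul_eq_mul {R A : Type*} [CommRing R] [Ring A] [Algebra R A]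
    {τ : R} {T₁ T₂ S W : A} (hS : (1 - τ • T₁) * S = T₁) (hW : (1 - τ • T₂) * W = S * T₂) :
    1 - τ • T₁ - τ • T₂ = (1 - τ • T₁) * (1 - τ • T₂) * (1 - τ ^ 2 • W) := by
  rw [mul_sub, mul_smul_comm, one_sub_smul_mul_one_sub_smul_mul hS hW]
  simp only [sub_mul, mul_sub, one_mul, mul_one, smul_mul_smul_comm, ← pow_two]
  abel

variable {𝕜 : Type*}

lemma isUnit_one_sub_inv_smul [Field 𝕜] {A : Type*} [Ring A] [Algebra 𝕜 A] {lam : 𝕜} {T : A}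
    (hlam : lam ≠ 0) (hT : lam ∈ resolventSet 𝕜 T) : IsUnit (1 - lam⁻¹ • T) := by
  rw [spectrum.mem_resolventSet_iff, Algebra.algebraMap_eq_smul_one] at hT
  exact (IsUnit.smul_sub_iff_sub_inv_smul (Units.mk0 lam hlam) T).mp hT

lemma exists_inverse_add_sub_smul [Field 𝕜] {A : Type*} [Ring A] [Algebra 𝕜 A] {lam : 𝕜}
    {T₁ T₂ S W : A} (hlam : lam ≠ 0) (hT₁ : IsUnit (1 - lam⁻¹ • T₁))
    (hT₂ : IsUnit (1 - lam⁻¹ • T₂)) (hW₁ : IsUnit (1 - (lam ^ 2)⁻¹ • W))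
    (hS : (1 - lam⁻¹ • T₁) * S = T₁) (hW : (1 - lam⁻¹ • T₂) * W = S * T₂) :
    ∃ R RW R₂ R₁ : A,
      RW * (1 - (lam ^ 2)⁻¹ • W) = 1 ∧ (1 - (lam ^ 2)⁻¹ • W) * RW = 1 ∧
      R₂ * (1 - lam⁻¹ • T₂) = 1 ∧ (1 - lam⁻¹ • T₂) * R₂ = 1 ∧
      R₁ * (1 - lam⁻¹ • T₁) = 1 ∧ (1 - lam⁻¹ • T₁) * R₁ = 1 ∧
      R = (-lam⁻¹) • (RW * R₂ * R₁) ∧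
      (T₁ + T₂ - lam • 1) * R = 1 ∧ R * (T₁ + T₂ - lam • 1) = 1 := by
  have hfactor : T₁ + T₂ - lam • 1 =
      (-lam) • ((1 - lam⁻¹ • T₁) * (1 - lam⁻¹ • T₂) * (1 - (lam ^ 2)⁻¹ • W)) := by
    rw [← inv_pow, ← one_sub_smul_sub_smul_eq_mul hS hW]
    simp only [smul_sub, smul_smul, neg_mul, mul_inv_cancel₀ hlam, neg_smul, one_smul]
    abel
  obtain ⟨U₁, hU₁⟩ := hT₁
  obtain ⟨U₂, hU₂⟩ := hT₂
  obtain ⟨U₃, hU₃⟩ := hW₁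
  rw [hfactor, ← hU₁, ← hU₂, ← hU₃]
  refine ⟨_, ↑U₃⁻¹, ↑U₂⁻¹, ↑U₁⁻¹, U₃.inv_mul, U₃.mul_inv, U₂.inv_mul, U₂.mul_inv, U₁.inv_mul,
    U₁.mul_inv, rfl, ?_, ?_⟩ <;>
  simp [mul_assoc, hlam]

section Compact

variable [RCLike 𝕜] {H : Type*} [NormedAddCommGroup H] [NormedSpace 𝕜 H]

lemma isCompactOperator_of_forall_mem_finiteDimensional {T : H →L[𝕜] H} (V : Submodule 𝕜 H)
    [FiniteDimensional 𝕜 V] (hV : ∀ f, T f ∈ V) : IsCompactOperator T :=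
  have : ProperSpace V := FiniteDimensional.proper_rclike 𝕜 V
  ((isCompactOperator_id (E := V)).comp_clm (T.codRestrict V hV)).clm_comp V.subtypeL

lemma isCompactOperator_of_isUnit_mul {U K : H →L[𝕜] H} (hU : IsUnit U)
    (hUK : IsCompactOperator (U * K)) : IsCompactOperator K := by
  obtain ⟨u, rfl⟩ := hU
  have hK : K = (↑u⁻¹ : H →L[𝕜] H) * (↑u * K) := (u.inv_mul_cancel_left K).symm
  rw [hK]
  exact hUK.clm_comp _

lemma isUnit_one_sub_of_isCompactOperator [CompleteSpace H] {K : H →L[𝕜] H}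
    (hK : IsCompactOperator K) (hfix : ∀ g, K g = g → g = 0) : IsUnit (1 - K) := by
  rcases hK.hasEigenvalue_or_mem_resolventSet one_ne_zero with heig | hres
  · obtain ⟨g, hg⟩ := heig.exists_hasEigenvector
    exact absurd (hfix g (by simpa using hg.apply_eq_smul)) hg.2
  · simpa [spectrum.mem_resolventSet_iff] using hres

lemma isUnit_one_sub_smul_of_isCompactOperator_mul [CompleteSpace H] {τ : 𝕜}
    {T₁ T₂ S W : H →L[𝕜] H} (hT₁ : IsUnit (1 - τ • T₁)) (hT₂ : IsUnit (1 - τ • T₂))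
    (hS : (1 - τ • T₁) * S = T₁) (hW : (1 - τ • T₂) * W = S * T₂)
    (hcompact : IsCompactOperator (T₁ * T₂)) (c : 𝕜) (hfix : ∀ g, (c • W) g = g → g = 0) :
    IsUnit (1 - c • W) :=
  have hWcompact : IsCompactOperator W := isCompactOperator_of_isUnit_mul (hT₁.mul hT₂)
    (by rwa [one_sub_smul_mul_one_sub_smul_mul hS hW])
  isUnit_one_sub_of_isCompactOperator (hWcompact.smul c) hfix

lemma eq_zero_of_apply_eq_smul {lam : 𝕜} {T : H →L[𝕜] H} (hlam : lam ∈ resolventSet 𝕜 T) {f : H}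
    (hf : T f = lam • f) : f = 0 := by
  obtain ⟨U, hU⟩ := hlam
  have hUf : (U : H →L[𝕜] H) f = 0 := by simp [hU, hf, Algebra.algebraMap_eq_smul_one]
  calc f = (↑U⁻¹ * ↑U : H →L[𝕜] H) f := by rw [U.inv_mul, one_apply_eq_self]
    _ = 0 := by rw [mul_apply_eq_comp, hUf, map_zero]

end Compact

end FactoredResolvent

section L2Families

variable {X 𝕜 ι : Type*} [MeasurableSpace X] {μ : Measure X} [RCLike 𝕜]

/-- An orthonormal system in `L²(μ)`, given by representatives so that its members can be evaluated
at points; the inner product is conjugate-linear in the first variable. -/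
structure IsOrthonormalSystem [DecidableEq ι] (μ : Measure X) (φ : ι → X → 𝕜) : Prop where
  memLp : ∀ k, MemLp (φ k) 2 μ
  integral_star_mul : ∀ i j, ∫ x, star (φ i x) * φ j x ∂μ = if i = j then 1 else 0

lemma IsOrthonormalSystem.not_ae_eq_zero [DecidableEq ι] {φ : ι → X → 𝕜}
    (hφ : IsOrthonormalSystem μ φ) (k : ι) : ¬ φ k =ᵐ[μ] 0 := fun hzero => by
  have hnorm : ∫ x, star (φ k x) * φ k x ∂μ = 0 :=
    integral_eq_zero_of_ae (hzero.mono fun x hx => by simp [hx])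
  simp only [hφ.integral_star_mul, if_true, one_ne_zero] at hnorm

lemma integrable_star_mul {u v : X → 𝕜} (hu : MemLp u 2 μ) (hv : MemLp v 2 μ) :
    Integrable (fun x => star (u x) * v x) μ :=
  hu.star.integrable_mul hv

lemma integral_sum_mul_star_mul_s11 [Fintype ι] {φ : ι → X → 𝕜} {g : X → 𝕜}
    (hφ : ∀ k, MemLp (φ k) 2 μ) (hg : MemLp g 2 μ) (c : ι → 𝕜) :
    ∫ s, (∑ k, c k * star (φ k s)) * g s ∂μ = ∑ k, c k * ∫ s, star (φ k s) * g s ∂μ := by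
  simp only [Finset.sum_mul, mul_assoc]
  rw [integral_finsetSum _ fun k _ => (integrable_star_mul (hφ k) hg).const_mul _]
  simp only [integral_const_mul]

lemma IsOrthonormalSystem.integral_star_mul_sum [Fintype ι] [DecidableEq ι] {φ : ι → X → 𝕜}
    (hφ : IsOrthonormalSystem μ φ) (c : ι → 𝕜) (k : ι) :
    ∫ s, star (φ k s) * ∑ l, c l * φ l s ∂μ = c k := by
  simp only [Finset.mul_sum, mul_left_comm _ (c _)]
  rw [integral_finsetSum _ fun l _ => (integrable_star_mul (hφ.memLp k) (hφ.memLp l)).const_mul _]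
  simp only [integral_const_mul, hφ.integral_star_mul, mul_ite, mul_one, mul_zero,
    Finset.sum_ite_eq, Finset.mem_univ, if_true]

lemma exists_memLp_two_orthogonal [Finite ι] (hμ : ¬ FiniteDimensional 𝕜 (Lp 𝕜 2 μ))
    {φ : ι → X → 𝕜} (hφ : ∀ k, MemLp (φ k) 2 μ) :
    ∃ w : X → 𝕜, MemLp w 2 μ ∧ (∀ k, ∫ s, star (φ k s) * w s ∂μ = 0) ∧ ¬ w =ᵐ[μ] 0 := by
  let V : Submodule 𝕜 (Lp 𝕜 2 μ) := Submodule.span 𝕜 (Set.range fun k => (hφ k).toLp)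
  have : FiniteDimensional 𝕜 V := FiniteDimensional.span_of_finite 𝕜 (Set.finite_range _)
  have hV : V ≠ ⊤ := fun htop => hμ (Module.finite_def.mpr (htop ▸ (Submodule.fg_top V).mp
    (Module.finite_def.mp this)))
  obtain ⟨w, hw, hw0⟩ := (Submodule.ne_bot_iff _).mp (mt Submodule.orthogonal_eq_bot_iff.mp hV)
  refine ⟨w, Lp.memLp w, fun k => ?_, fun h0 => hw0 ((Lp.eq_zero_iff_ae_eq_zero).mpr h0)⟩
  have horth := hw _ (Submodule.subset_span ⟨k, rfl⟩)
  rw [L2.inner_def] at horth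
  rw [← horth]
  refine integral_congr_ae ((hφ k).coeFn_toLp.mono fun s hs => ?_)
  simp [hs, RCLike.inner_apply, mul_comm]

lemma exists_memLp_ne_zero_of_measure_ne_zero [SigmaFinite μ] {A : Set X} (hA : MeasurableSet A)
    (hA0 : μ A ≠ 0) (q : ENNReal) :
    ∃ v : X → 𝕜, MemLp v q μ ∧ (∀ x ∉ A, v x = 0) ∧ ¬ v =ᵐ[μ] 0 := by
  obtain ⟨B, hB, hBA, hB0, hBfin⟩ := Measure.exists_subset_measure_lt_top hA hA0.bot_lt
  refine ⟨B.indicator fun _ => 1, memLp_indicator_const q hB 1 (.inr hBfin.ne),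
    fun x hx => Set.indicator_of_notMem (fun hxB => hx (hBA hxB)) _, fun h0 => hB0.ne' ?_⟩
  rw [Set.indicator_ae_eq_zero] at h0
  simpa [Function.support_const] using h0

lemma mem_span_range_toLp_of_ae_eq_sum [Fintype ι] {q : ENNReal} {u : ι → X → 𝕜}
    (hu : ∀ i, MemLp (u i) q μ) {f : Lp 𝕜 q μ} (c : ι → 𝕜)
    (hf : ∀ᵐ x ∂μ, f x = ∑ i, c i * u i x) :
    f ∈ Submodule.span 𝕜 (Set.range fun i => (hu i).toLp) := by
  have hsum : f = ∑ i, c i • (hu i).toLp := Lp.ext <| by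
    have hterm : ∀ᵐ x ∂μ, ∀ i, (c i • (hu i).toLp : Lp 𝕜 q μ) x = c i * u i x :=
      ae_all_iff.mpr fun i => by
        filter_upwards [Lp.coeFn_smul (c i) (hu i).toLp, (hu i).coeFn_toLp] with x hsmul hx
        rw [hsmul, Pi.smul_apply, hx, smul_eq_mul]
    filter_upwards [hf, Lp.coeFn_fun_finsetSum Finset.univ fun i => c i • (hu i).toLp, hterm]
      with x hfx hx hi
    simp only [hfx, hx, hi]
  exact hsum ▸ Submodule.sum_smul_mem _ _ fun i _ => Submodule.subset_span ⟨i, rfl⟩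

lemma not_finiteDimensional_Lp_restrict_of_isCompact {ρ : Measure ℝ} [NullSingletonClass ρ]
    [IsFiniteMeasureOnCompacts ρ] {K : Set ℝ} (hK : IsCompact K) (hK0 : ρ K ≠ 0) (q : ENNReal) :
    ¬ FiniteDimensional 𝕜 (Lp 𝕜 q (ρ.restrict K)) := fun hfin => by
  let F : Polynomial 𝕜 → ℝ → 𝕜 := fun P s => P.eval (s : 𝕜)
  have hcont : ∀ P, Continuous (F P) := fun P => P.continuous.comp RCLike.continuous_ofReal
  have hmem : ∀ P, MemLp (F P) q (ρ.restrict K) := fun P => by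
    have : IsFiniteMeasure (ρ.restrict K) := ⟨by simpa using hK.measure_lt_top⟩
    obtain ⟨C, hC⟩ := hK.exists_bound_of_continuousOn (hcont P).continuousOn
    exact .of_bound (hcont P).aestronglyMeasurable C
      ((ae_restrict_iff' hK.measurableSet).mpr (.of_forall hC))
  let L : Polynomial 𝕜 →ₗ[𝕜] Lp 𝕜 q (ρ.restrict K) :=
    { toFun := fun P => (hmem P).toLp
      map_add' := fun P Q => by
        rw [← MemLp.toLp_add]; congr 1; ext; simp [F]
      map_smul' := fun c P => by
        rw [RingHom.id_apply, ← MemLp.toLp_const_smul]; congr 1; ext; simp [F] }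
  refine Polynomial.not_finite (R := 𝕜) (Module.Finite.of_injective L
    ((injective_iff_map_eq_zero L).mpr fun P hP => by_contra fun hP0 => hK0 ?_))
  have hzero : ∀ᵐ s ∂ρ.restrict K, F P s = 0 :=
    (hmem P).coeFn_toLp.symm.trans ((Lp.eq_zero_iff_ae_eq_zero).mp hP)
  have hroots : {s : ℝ | F P s = 0}.Finite :=
    (Polynomial.finite_setOfPred_isRoot hP0).preimage RCLike.ofReal_injective.injOn
  exact measure_mono_null_ae ((ae_restrict_iff' hK.measurableSet).mp hzero)
    (hroots.measure_zero ρ)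

end L2Families

section Slices

variable {X Y 𝕜 : Type*} [MeasurableSpace X] [RCLike 𝕜]

/-- The partial inner product `y ↦ ⟨u, F(·, y)⟩` in the first variable of `F`. The one in the second
variable is obtained by applying it to `F ∘ Prod.swap`. -/
def sliceInner (μ : Measure X) (u : X → 𝕜) (F : X × Y → 𝕜) (y : Y) : 𝕜 :=
  ∫ s, star (u s) * F (s, y) ∂μ

lemma sliceInner_mul (μ : Measure X) (u w : X → 𝕜) (v : Y → 𝕜) (y : Y) :
    sliceInner μ u (fun z => w z.1 * v z.2) y = (∫ s, star (u s) * w s ∂μ) * v y := by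
  simp only [sliceInner, ← mul_assoc, integral_mul_const]

lemma sliceInner_sum_mul {κ : Type*} [Fintype κ] {μ : Measure X} {u : X → 𝕜} {w : κ → X → 𝕜}
    (hw : ∀ j, Integrable (fun s => star (u s) * w j s) μ) (v : κ → Y → 𝕜) (y : Y) :
    sliceInner μ u (fun z => ∑ j, w j z.1 * v j z.2) y =
      ∑ j, (∫ s, star (u s) * w j s ∂μ) * v j y := by
  simp only [← sliceInner_mul]
  simp only [sliceInner, Finset.mul_sum, ← mul_assoc]
  exact integral_finsetSum _ fun j _ => (hw j).mul_const _

variable [MeasurableSpace Y] {μ : Measure X} {ν : Measure Y}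

lemma memLp_two_mul_prod {w : X → 𝕜} {v : Y → 𝕜} (hw : MemLp w 2 μ) (hv : MemLp v 2 ν) :
    MemLp (fun z : X × Y => w z.1 * v z.2) 2 (μ.prod ν) := by
  have hmeas : AEStronglyMeasurable (fun z : X × Y => w z.1 * v z.2) (μ.prod ν) :=
    hw.1.comp_fst.mul hv.1.comp_snd
  rw [memLp_two_iff_integrable_sq_norm hmeas]
  simpa only [norm_mul, mul_pow] using hw.integrable_norm_pow two_ne_zero |>.mul_prod
    (hv.integrable_norm_pow two_ne_zero)

variable [SFinite ν]

lemma integrable_mul_sliceInner_swap {u : X → 𝕜} {v : Y → 𝕜} {F : X × Y → 𝕜} (hu : MemLp u 2 μ)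
    (hv : MemLp v 2 ν) (hF : MemLp F 2 (μ.prod ν)) :
    Integrable (fun x => u x * sliceInner ν v (F ∘ Prod.swap) x) μ := by
  have hprod : Integrable (fun z : X × Y => u z.1 * (star (v z.2) * F z)) (μ.prod ν) :=
    ((memLp_two_mul_prod hu hv.star).integrable_mul hF).congr (.of_forall fun _ => mul_assoc _ _ _)
  have hint := hprod.integral_prod_left
  simp only [integral_const_mul] at hint
  exact hint

variable [SFinite μ]

lemma ae_ae_slice_of_ae_prod {q : X × Y → Prop} (hq : ∀ᵐ z ∂μ.prod ν, q z) :
    ∀ᵐ y ∂ν, ∀ᵐ x ∂μ, q (x, y) :=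
  Measure.ae_ae_of_ae_prod (Measure.measurePreserving_swap.quasiMeasurePreserving.ae hq)

lemma sliceInner_congr_ae (u : X → 𝕜) {F G : X × Y → 𝕜} (hFG : F =ᵐ[μ.prod ν] G) :
    sliceInner μ u F =ᵐ[ν] sliceInner μ u G := by
  filter_upwards [ae_ae_slice_of_ae_prod hFG] with y hy
  exact integral_congr_ae (hy.mono fun s hs => by simp only [hs])

lemma ae_memLp_two_slice {F : X × Y → 𝕜} (hF : MemLp F 2 (μ.prod ν)) :
    ∀ᵐ y ∂ν, MemLp (fun x => F (x, y)) 2 μ := by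
  filter_upwards [hF.1.prod_swap.prodMk_left,
    (hF.integrable_norm_pow two_ne_zero).prod_left_ae] with y hmeas hint
  exact (memLp_two_iff_integrable_sq_norm hmeas).mpr hint

lemma ae_eq_zero_or_of_mul_prod_ae_eq_zero {w : X → 𝕜} {v : Y → 𝕜}
    (hwv : ∀ᵐ z ∂μ.prod ν, w z.1 * v z.2 = 0) : w =ᵐ[μ] 0 ∨ v =ᵐ[ν] 0 := by
  refine or_iff_not_imp_right.mpr fun hv => ?_
  obtain ⟨y, hvy, hy⟩ := (Filter.not_eventually.mp hv).and_eventually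
    (ae_ae_slice_of_ae_prod hwv) |>.exists
  exact hy.mono fun x hx => (mul_eq_zero.mp hx).resolve_right hvy

end Slices

section PartialIntegral

variable {X Y 𝕜 ι : Type*} [MeasurableSpace X] [MeasurableSpace Y] {μ : Measure X} {ν : Measure Y}
  [RCLike 𝕜] [Fintype ι]
  {φ : ι → X → 𝕜} {h g : ι → Y → 𝕜} {T S : Lp 𝕜 2 (μ.prod ν) →L[𝕜] Lp 𝕜 2 (μ.prod ν)}

/-- `T = ∑ k, h k(y) · P k`, where `P k` integrates the first variable against
`φ k(x) · conj (φ k(s))`. The functions `h k` are the symbol of `T`. This is a predicate because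
boundedness of `T` is part of the data. -/
def IsPartialIntegralFst (φ : ι → X → 𝕜) (h : ι → Y → 𝕜)
    (T : Lp 𝕜 2 (μ.prod ν) →L[𝕜] Lp 𝕜 2 (μ.prod ν)) : Prop :=
  ∀ f, ∀ᵐ z ∂μ.prod ν, T f z = ∑ k, h k z.2 * φ k z.1 * sliceInner μ (φ k) f z.2

/-- The analogue of `IsPartialIntegralFst` with the roles of the two variables exchanged. -/
def IsPartialIntegralSnd (ψ : ι → Y → 𝕜) (p : ι → X → 𝕜)
    (T : Lp 𝕜 2 (μ.prod ν) →L[𝕜] Lp 𝕜 2 (μ.prod ν)) : Prop :=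
  ∀ f, ∀ᵐ z ∂μ.prod ν, T f z = ∑ j, p j z.1 * ψ j z.2 * sliceInner ν (ψ j) (f ∘ Prod.swap) z.1

lemma isPartialIntegralFst_of_sum_mul {P : ι → Lp 𝕜 2 (μ.prod ν) →L[𝕜] Lp 𝕜 2 (μ.prod ν)}
    (hP : ∀ k f, ∀ᵐ z ∂μ.prod ν, P k f z = φ k z.1 * ∫ s, star (φ k s) * f (s, z.2) ∂μ)
    (hT : ∀ f, ∀ᵐ z ∂μ.prod ν, T f z = ∑ k, h k z.2 * P k f z) :
    IsPartialIntegralFst φ h T := fun f => by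
  filter_upwards [hT f, ae_all_iff.mpr fun k => hP k f] with z hTz hPz
  simp only [hTz, hPz, sliceInner, mul_assoc]

namespace IsPartialIntegralFst

lemma eq_of_symbol_ae_eq (hT : IsPartialIntegralFst φ h T) (hS : IsPartialIntegralFst φ g S)
    (hhg : ∀ k, h k =ᵐ[ν] g k) : T = S := by
  have hsnd : ∀ᵐ z ∂μ.prod ν, ∀ k, h k z.2 = g k z.2 :=
    Measure.quasiMeasurePreserving_snd.ae (ae_all_iff.mpr hhg)
  refine ContinuousLinearMap.ext fun f => Lp.ext ?_
  filter_upwards [hT f, hS f, hsnd] with z hTz hSz hz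
  simp only [hTz, hSz, hz]

lemma sub (hT : IsPartialIntegralFst φ h T) (hS : IsPartialIntegralFst φ g S) :
    IsPartialIntegralFst φ (h - g) (T - S) := fun f => by
  filter_upwards [hT f, hS f, Lp.coeFn_sub (T f) (S f)] with z hTz hSz hz
  rw [sub_apply, hz, Pi.sub_apply, hTz, hSz, ← Finset.sum_sub_distrib]
  simp only [Pi.sub_apply, sub_mul]

lemma const_smul (hT : IsPartialIntegralFst φ h T) (c : 𝕜) :
    IsPartialIntegralFst φ (c • h) (c • T) := fun f => by
  filter_upwards [hT f, Lp.coeFn_smul c (T f)] with z hTz hz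
  rw [smul_apply, hz, Pi.smul_apply, hTz, Finset.smul_sum]
  simp only [Pi.smul_apply, smul_eq_mul, mul_assoc]

end IsPartialIntegralFst

variable [SFinite μ] [SFinite ν]

lemma isPartialIntegralFst_of_kernel (hφ : ∀ k, MemLp (φ k) 2 μ)
    (hT : ∀ f, ∀ᵐ z ∂μ.prod ν,
      T f z = ∫ s, (∑ k, φ k z.1 * star (φ k s) * h k z.2) * f (s, z.2) ∂μ) :
    IsPartialIntegralFst φ h T := fun f => by
  filter_upwards [hT f, Measure.quasiMeasurePreserving_snd.ae (ae_memLp_two_slice (Lp.memLp f))]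
    with z hz hslice
  have hkernel : ∀ s, ∑ k, φ k z.1 * star (φ k s) * h k z.2 =
      ∑ k, h k z.2 * φ k z.1 * star (φ k s) := fun s =>
    Finset.sum_congr rfl fun k _ => by ring
  simp only [hz, hkernel]
  exact integral_sum_mul_star_mul_s11 hφ hslice _

lemma isPartialIntegralSnd_of_kernel {ψ : ι → Y → 𝕜} {p : ι → X → 𝕜} (hψ : ∀ j, MemLp (ψ j) 2 ν)
    (hT : ∀ f, ∀ᵐ z ∂μ.prod ν,
      T f z = ∫ t, (∑ j, p j z.1 * ψ j z.2 * star (ψ j t)) * f (z.1, t) ∂ν) :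
    IsPartialIntegralSnd ψ p T := fun f => by
  have hswap : MemLp (f ∘ Prod.swap) 2 (ν.prod μ) :=
    (Lp.memLp f).comp_measurePreserving Measure.measurePreserving_swap
  filter_upwards [hT f, Measure.quasiMeasurePreserving_fst.ae (ae_memLp_two_slice hswap)]
    with z hz hslice
  rw [hz]
  exact integral_sum_mul_star_mul_s11 hψ hslice _

namespace IsPartialIntegralFst

lemma apply_ae_eq (hT : IsPartialIntegralFst φ h T) {f : Lp 𝕜 2 (μ.prod ν)} {F : X × Y → 𝕜}
    (hF : f =ᵐ[μ.prod ν] F) :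
    ∀ᵐ z ∂μ.prod ν, T f z = ∑ k, h k z.2 * φ k z.1 * sliceInner μ (φ k) F z.2 := by
  have hslice : ∀ᵐ z ∂μ.prod ν, ∀ k, sliceInner μ (φ k) f z.2 = sliceInner μ (φ k) F z.2 :=
    ae_all_iff.mpr fun k => Measure.quasiMeasurePreserving_snd.ae (sliceInner_congr_ae (φ k) hF)
  filter_upwards [hT f, hslice] with z hz hk
  simp only [hz, hk]

lemma mul [DecidableEq ι] (hφ : IsOrthonormalSystem μ φ) (hT : IsPartialIntegralFst φ h T)
    (hS : IsPartialIntegralFst φ g S) : IsPartialIntegralFst φ (h * g) (T * S) := fun f => by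
  filter_upwards [hT.apply_ae_eq (hS f)] with z hz
  rw [mul_apply_eq_comp, hz]
  refine Finset.sum_congr rfl fun k _ => ?_
  have hcoeff : sliceInner μ (φ k)
      (fun z => ∑ l, g l z.2 * φ l z.1 * sliceInner μ (φ l) f z.2) z.2 =
        g k z.2 * sliceInner μ (φ k) f z.2 := by
    rw [← hφ.integral_star_mul_sum (fun l => g l z.2 * sliceInner μ (φ l) f z.2) k]
    simp only [sliceInner, mul_right_comm]
  rw [hcoeff, Pi.mul_apply, Pi.mul_apply]
  ring

lemma one_sub_smul_mul_eq [DecidableEq ι] (hφ : IsOrthonormalSystem μ φ)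
    (hT : IsPartialIntegralFst φ h T) {τ : 𝕜}
    (hS : IsPartialIntegralFst φ (fun k y => h k y / (1 - τ * h k y)) S)
    (hτ : ∀ k, ∀ᵐ y ∂ν, 1 - τ * h k y ≠ 0) : (1 - τ • T) * S = T := by
  rw [sub_mul, one_mul, smul_mul_assoc]
  refine (hS.sub ((hT.mul hφ hS).const_smul τ)).eq_of_symbol_ae_eq hT fun k => ?_
  filter_upwards [hτ k] with y hy
  calc h k y / (1 - τ * h k y) - τ * (h k y * (h k y / (1 - τ * h k y)))
      = h k y / (1 - τ * h k y) * (1 - τ * h k y) := by ring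
    _ = h k y := div_mul_cancel₀ _ hy

lemma ae_eq_zero_or_of_apply_mul_prod (hT : IsPartialIntegralFst φ h T) {lam : 𝕜}
    (hlam : lam ∈ resolventSet 𝕜 T) {w : X → 𝕜} {v : Y → 𝕜} (hw : MemLp w 2 μ) (hv : MemLp v 2 ν)
    (heig : ∀ᵐ y ∂ν, ∀ x, ∑ k, h k y * φ k x * ((∫ s, star (φ k s) * w s ∂μ) * v y) =
      lam * (w x * v y)) :
    w =ᵐ[μ] 0 ∨ v =ᵐ[ν] 0 := by
  have hwv := memLp_two_mul_prod hw hv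
  have heigenvector : T hwv.toLp = lam • hwv.toLp := Lp.ext <| by
    filter_upwards [hT.apply_ae_eq hwv.coeFn_toLp, hwv.coeFn_toLp, Lp.coeFn_smul lam hwv.toLp,
      Measure.quasiMeasurePreserving_snd.ae heig] with z hTz hz hsmul hzeig
    simp only [hTz, hsmul, Pi.smul_apply, smul_eq_mul, hz, sliceInner_mul, hzeig]
  have hzero := (Lp.eq_zero_iff_ae_eq_zero).mp (eq_zero_of_apply_eq_smul hlam heigenvector)
  exact ae_eq_zero_or_of_mul_prod_ae_eq_zero (hwv.coeFn_toLp.symm.trans hzero)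

lemma symbol_ae_ne [DecidableEq ι] {ν : Measure Y} [SigmaFinite ν]
    {T : Lp 𝕜 2 (μ.prod ν) →L[𝕜] Lp 𝕜 2 (μ.prod ν)} (hφ : IsOrthonormalSystem μ φ)
    (hh : ∀ k, AEStronglyMeasurable (h k) ν) (hT : IsPartialIntegralFst φ h T) {lam : 𝕜}
    (hlam : lam ∈ resolventSet 𝕜 T) (k : ι) : ∀ᵐ y ∂ν, h k y ≠ lam := by
  by_contra hk
  let A : Set Y := {y | (hh k).mk (h k) y = lam}
  have hA : MeasurableSet A :=
    (hh k).stronglyMeasurable_mk.measurable (measurableSet_singleton lam)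
  have hA0 : ν A ≠ 0 := fun hA0 => hk <| by
    filter_upwards [(hh k).ae_eq_mk, measure_eq_zero_iff_ae_notMem.mp hA0] with y hy hyA
    exact hy ▸ hyA
  obtain ⟨v, hv, hvA, hv0⟩ := exists_memLp_ne_zero_of_measure_ne_zero (𝕜 := 𝕜) hA hA0 2
  refine (hT.ae_eq_zero_or_of_apply_mul_prod hlam (hφ.memLp k) hv ?_).elim
    (hφ.not_ae_eq_zero k) hv0
  filter_upwards [(hh k).ae_eq_mk] with y hy x
  simp only [hφ.integral_star_mul, ite_mul, one_mul, zero_mul, mul_ite, mul_zero,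
    Finset.sum_ite_eq', Finset.mem_univ, if_true]
  by_cases hyA : y ∈ A
  · rw [hy, show (hh k).mk (h k) y = lam from hyA, mul_assoc]
  · simp only [hvA y hyA, mul_zero]

lemma zero_mem_spectrum {ν : Measure Y} [SigmaFinite ν] [NeZero ν]
    {T : Lp 𝕜 2 (μ.prod ν) →L[𝕜] Lp 𝕜 2 (μ.prod ν)} (hμ : ¬ FiniteDimensional 𝕜 (Lp 𝕜 2 μ))
    (hφ : ∀ k, MemLp (φ k) 2 μ) (hT : IsPartialIntegralFst φ h T) : (0 : 𝕜) ∈ spectrum 𝕜 T := by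
  obtain ⟨w, hw, horth, hw0⟩ := exists_memLp_two_orthogonal hμ hφ
  obtain ⟨v, hv, -, hv0⟩ :=
    exists_memLp_ne_zero_of_measure_ne_zero (𝕜 := 𝕜) MeasurableSet.univ (NeZero.ne (ν Set.univ)) 2
  intro hlam
  refine (hT.ae_eq_zero_or_of_apply_mul_prod hlam hw hv (.of_forall fun y x => ?_)).elim hw0 hv0
  simp only [horth, zero_mul, mul_zero, Finset.sum_const_zero]

lemma isCompactOperator_mul {κ : Type*} [Fintype κ] {ψ : κ → Y → 𝕜} {p : κ → X → 𝕜}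
    (hφ : ∀ k, MemLp (φ k) 2 μ) (hh : ∀ k, MemLp (h k) ⊤ ν) (hψ : ∀ j, MemLp (ψ j) 2 ν)
    (hp : ∀ j, MemLp (p j) ⊤ μ) (hT : IsPartialIntegralFst φ h T)
    (hS : IsPartialIntegralSnd ψ p S) : IsCompactOperator (T * S) := by
  have hprod : ∀ q : ι × κ,
      MemLp (fun z : X × Y => φ q.1 z.1 * (h q.1 z.2 * ψ q.2 z.2)) 2 (μ.prod ν) :=
    fun q => memLp_two_mul_prod (hφ q.1) ((hψ q.2).mul' (hh q.1))
  have := FiniteDimensional.span_of_finite 𝕜 (Set.finite_range fun q => (hprod q).toLp)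
  refine isCompactOperator_of_forall_mem_finiteDimensional _ fun f =>
    mem_span_range_toLp_of_ae_eq_sum hprod
      (fun q => ∫ s, star (φ q.1 s) * (p q.2 s * sliceInner ν (ψ q.2) (f ∘ Prod.swap) s) ∂μ) ?_
  have hint : ∀ k j, Integrable
      (fun s => star (φ k s) * (p j s * sliceInner ν (ψ j) (f ∘ Prod.swap) s)) μ := fun k j => by
    simpa only [Pi.star_apply, mul_assoc] using
      integrable_mul_sliceInner_swap ((hp j).mul' (hφ k).star) (hψ j) (Lp.memLp f)
  have hSf : S f =ᵐ[μ.prod ν]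
      fun z => ∑ j, (p j z.1 * sliceInner ν (ψ j) (f ∘ Prod.swap) z.1) * ψ j z.2 :=
    (hS f).mono fun z hz => hz.trans (Finset.sum_congr rfl fun j _ => mul_right_comm _ _ _)
  filter_upwards [hT.apply_ae_eq hSf] with z hz
  rw [mul_apply_eq_comp, hz, Fintype.sum_prod_type]
  refine Finset.sum_congr rfl fun k _ => ?_
  rw [sliceInner_sum_mul (hint k), Finset.mul_sum]
  exact Finset.sum_congr rfl fun j _ => by ring

end IsPartialIntegralFst

end PartialIntegral

lemma memLp_top_ofReal {X 𝕜 : Type*} [MeasurableSpace X] [RCLike 𝕜] {μ : Measure X} {u : X → ℝ}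
    (hu : Measurable u) (hbdd : ∃ C : ℝ, ∀ᵐ x ∂μ, |u x| ≤ C) :
    MemLp (fun x => (u x : 𝕜)) ⊤ μ :=
  hbdd.elim fun C hC => (memLp_top_of_bound hu.aestronglyMeasurable C hC).ofReal

theorem statement11_general {X Y 𝕜 ι κ : Type*} [MeasurableSpace X] [MeasurableSpace Y] [RCLike 𝕜]
    [Fintype ι] [DecidableEq ι] [Fintype κ] {μ : Measure X} {ν : Measure Y} [SFinite μ]
    [SigmaFinite ν] {φ : ι → X → 𝕜} (hφ : IsOrthonormalSystem μ φ)
    {h : ι → Y → 𝕜} (hh : ∀ k, MemLp (h k) ⊤ ν)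
    {ψ : κ → Y → 𝕜} (hψ : ∀ j, MemLp (ψ j) 2 ν) {p : κ → X → 𝕜} (hp : ∀ j, MemLp (p j) ⊤ μ)
    {T1 T2 : Lp 𝕜 2 (μ.prod ν) →L[𝕜] Lp 𝕜 2 (μ.prod ν)}
    (hT1 : ∀ f, ∀ᵐ z ∂μ.prod ν,
      T1 f z = ∫ s, (∑ k, φ k z.1 * star (φ k s) * h k z.2) * f (s, z.2) ∂μ)
    (hT2 : ∀ f, ∀ᵐ z ∂μ.prod ν,
      T2 f z = ∫ t, (∑ j, p j z.1 * ψ j z.2 * star (ψ j t)) * f (z.1, t) ∂ν)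
    {P : ι → (Lp 𝕜 2 (μ.prod ν) →L[𝕜] Lp 𝕜 2 (μ.prod ν))}
    (hP : ∀ k, ∀ f, ∀ᵐ z ∂μ.prod ν, P k f z = φ k z.1 * ∫ s, star (φ k s) * f (s, z.2) ∂μ)
    {S1 W1 : 𝕜 → (Lp 𝕜 2 (μ.prod ν) →L[𝕜] Lp 𝕜 2 (μ.prod ν))}
    (hS1 : ∀ τ, τ ≠ 0 → τ⁻¹ ∈ resolventSet 𝕜 T1 → τ⁻¹ ∈ resolventSet 𝕜 T2 →
      ∀ f, ∀ᵐ z ∂μ.prod ν, S1 τ f z = ∑ k, (h k z.2 / (1 - τ * h k z.2)) * P k f z)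
    (hW1 : ∀ τ, τ ≠ 0 → τ⁻¹ ∈ resolventSet 𝕜 T1 → τ⁻¹ ∈ resolventSet 𝕜 T2 →
      (1 - τ • T2) * W1 τ = S1 τ * T2)
    {DT : Set 𝕜}
    (hDT : DT = {τ : 𝕜 | τ ≠ 0 ∧ τ⁻¹ ∈ resolventSet 𝕜 T1 ∧ τ⁻¹ ∈ resolventSet 𝕜 T2 ∧
      ∃ g : Lp 𝕜 2 (μ.prod ν), g ≠ 0 ∧ (τ ^ 2 • W1 τ) g = g})
    {D0 : Set 𝕜} (hD0 : D0 = (fun τ : 𝕜 => τ⁻¹) '' DT)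
    {lam : 𝕜} (hlam : lam ≠ 0) (hmem : lam ∉ spectrum 𝕜 T1 ∪ spectrum 𝕜 T2 ∪ D0) :
    ∃ R RW Rt2 Rt1 : Lp 𝕜 2 (μ.prod ν) →L[𝕜] Lp 𝕜 2 (μ.prod ν),
      RW * (1 - (lam ^ 2)⁻¹ • W1 lam⁻¹) = 1 ∧ (1 - (lam ^ 2)⁻¹ • W1 lam⁻¹) * RW = 1 ∧
      Rt2 * (1 - lam⁻¹ • T2) = 1 ∧ (1 - lam⁻¹ • T2) * Rt2 = 1 ∧
      Rt1 * (1 - lam⁻¹ • T1) = 1 ∧ (1 - lam⁻¹ • T1) * Rt1 = 1 ∧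
      R = (-lam⁻¹) • (RW * Rt2 * Rt1) ∧
      (T1 + T2 - lam • 1) * R = 1 ∧ R * (T1 + T2 - lam • 1) = 1 := by
  obtain ⟨⟨hr1, hr2⟩, hlamD0⟩ : (lam ∈ resolventSet 𝕜 T1 ∧ lam ∈ resolventSet 𝕜 T2) ∧ lam ∉ D0 := by
    simpa only [spectrum, Set.mem_union, not_or, Set.notMem_compl_iff] using hmem
  have hτ := inv_ne_zero hlam
  have hr1' : lam⁻¹⁻¹ ∈ resolventSet 𝕜 T1 := (inv_inv lam).symm ▸ hr1
  have hr2' : lam⁻¹⁻¹ ∈ resolventSet 𝕜 T2 := (inv_inv lam).symm ▸ hr2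
  have hT1' := isPartialIntegralFst_of_kernel hφ.memLp hT1
  have hS : (1 - lam⁻¹ • T1) * S1 lam⁻¹ = T1 :=
    hT1'.one_sub_smul_mul_eq hφ (isPartialIntegralFst_of_sum_mul hP (hS1 _ hτ hr1' hr2')) fun k =>
      (hT1'.symbol_ae_ne hφ (fun l => (hh l).1) hr1 k).mono fun y hy =>
        sub_ne_zero.mpr fun h1 => hy ((inv_mul_eq_one₀ hlam).mp h1.symm).symm
  have hW := hW1 _ hτ hr1' hr2'
  have hU1 := isUnit_one_sub_inv_smul hlam hr1
  have hU2 := isUnit_one_sub_inv_smul hlam hr2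
  have hcompact : IsCompactOperator (T1 * T2) :=
    hT1'.isCompactOperator_mul hφ.memLp hh hψ hp (isPartialIntegralSnd_of_kernel hψ hT2)
  have hfix : ∀ g, ((lam ^ 2)⁻¹ • W1 lam⁻¹) g = g → g = 0 := fun g hg => by_contra fun hg0 =>
    hlamD0 (hD0 ▸ ⟨lam⁻¹, hDT ▸ ⟨hτ, hr1', hr2', g, hg0, (inv_pow lam 2).symm ▸ hg⟩, inv_inv lam⟩)
  exact exists_inverse_add_sub_smul hlam hU1 hU2
    (isUnit_one_sub_smul_of_isCompactOperator_mul hU1 hU2 hS hW hcompact _ hfix) hS hW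

theorem statement11
    (a b c d : ℝ) (hab : a < b) (hcd : c < d)
    (n : ℕ) (hn : 1 ≤ n)
    (φ : Fin n → ℝ → ℂ)
    (hφL2 : ∀ k, MemLp (φ k) 2 (muI a b))
    (hφON : ∀ i j, ∫ x, star (φ i x) * φ j x ∂(muI a b) = if i = j then 1 else 0)
    (h : Fin n → ℝ → ℝ)
    (hhmeas : ∀ k, Measurable (h k))
    (hhbdd : ∀ k, ∃ C : ℝ, ∀ᵐ y ∂(muI c d), |h k y| ≤ C)
    (m : ℕ) (hm : 1 ≤ m)
    (ψ : Fin m → ℝ → ℂ)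
    (hψL2 : ∀ j, MemLp (ψ j) 2 (muI c d))
    (hψON : ∀ i j, ∫ y, star (ψ i y) * ψ j y ∂(muI c d) = if i = j then 1 else 0)
    (p : Fin m → ℝ → ℝ)
    (hpmeas : ∀ j, Measurable (p j))
    (hpbdd : ∀ j, ∃ C : ℝ, ∀ᵐ x ∂(muI a b), |p j x| ≤ C)
    (T1 T2 : Lp ℂ 2 ((muI a b).prod (muI c d)) →L[ℂ] Lp ℂ 2 ((muI a b).prod (muI c d)))
    (hT1sa : IsSelfAdjoint T1) (hT2sa : IsSelfAdjoint T2)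
    (hT1 : ∀ f : Lp ℂ 2 ((muI a b).prod (muI c d)),
      ∀ᵐ z ∂((muI a b).prod (muI c d)),
        T1 f z = ∫ s, (∑ k, φ k z.1 * star (φ k s) * (h k z.2 : ℂ)) * f (s, z.2) ∂(muI a b))
    (hT2 : ∀ f : Lp ℂ 2 ((muI a b).prod (muI c d)),
      ∀ᵐ z ∂((muI a b).prod (muI c d)),
        T2 f z = ∫ t, (∑ j, (p j z.1 : ℂ) * ψ j z.2 * star (ψ j t)) * f (z.1, t) ∂(muI c d))
    -- the orthogonal projections `P k`
    (P : Fin n → (Lp ℂ 2 ((muI a b).prod (muI c d)) →L[ℂ] Lp ℂ 2 ((muI a b).prod (muI c d))))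
    (hP : ∀ k, ∀ f : Lp ℂ 2 ((muI a b).prod (muI c d)),
      ∀ᵐ z ∂((muI a b).prod (muI c d)),
        P k f z = φ k z.1 * ∫ s, star (φ k s) * f (s, z.2) ∂(muI a b))
    -- the operators S₁(τ)
    (S1 : ℂ → (Lp ℂ 2 ((muI a b).prod (muI c d)) →L[ℂ] Lp ℂ 2 ((muI a b).prod (muI c d))))
    (hS1 : ∀ τ : ℂ, τ ≠ 0 → τ⁻¹ ∈ resolventSet ℂ T1 → τ⁻¹ ∈ resolventSet ℂ T2 →
      ∀ f : Lp ℂ 2 ((muI a b).prod (muI c d)),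
        ∀ᵐ z ∂((muI a b).prod (muI c d)),
          S1 τ f z = ∑ k, ((h k z.2 : ℂ) / (1 - τ * (h k z.2 : ℂ))) * P k f z)
    -- the operators W₁(τ) = (E-τT₂)⁻¹ S₁(τ) T₂
    (W1 : ℂ → (Lp ℂ 2 ((muI a b).prod (muI c d)) →L[ℂ] Lp ℂ 2 ((muI a b).prod (muI c d))))
    (hW1 : ∀ τ : ℂ, τ ≠ 0 → τ⁻¹ ∈ resolventSet ℂ T1 → τ⁻¹ ∈ resolventSet ℂ T2 →
      (1 - τ • T2) * W1 τ = S1 τ * T2)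
    -- the sets D(T) and R(T)
    (DT : Set ℂ)
    (hDT : DT = {τ : ℂ | τ ≠ 0 ∧ τ⁻¹ ∈ resolventSet ℂ T1 ∧ τ⁻¹ ∈ resolventSet ℂ T2 ∧
      ∃ g : Lp ℂ 2 ((muI a b).prod (muI c d)), g ≠ 0 ∧ (τ ^ 2 • W1 τ) g = g})
    -- the set D₀(T)
    (D0 : Set ℂ) (hD0 : D0 = (fun τ : ℂ => τ⁻¹) '' DT) :
    ∀ lam : ℂ, lam ∉ spectrum ℂ T1 ∪ spectrum ℂ T2 ∪ D0 →
      ∃ R RW Rt2 Rt1 :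
          Lp ℂ 2 ((muI a b).prod (muI c d)) →L[ℂ] Lp ℂ 2 ((muI a b).prod (muI c d)),
        RW * (1 - (lam ^ 2)⁻¹ • W1 lam⁻¹) = 1 ∧ (1 - (lam ^ 2)⁻¹ • W1 lam⁻¹) * RW = 1 ∧
        Rt2 * (1 - lam⁻¹ • T2) = 1 ∧ (1 - lam⁻¹ • T2) * Rt2 = 1 ∧
        Rt1 * (1 - lam⁻¹ • T1) = 1 ∧ (1 - lam⁻¹ • T1) * Rt1 = 1 ∧
        R = (-lam⁻¹) • (RW * Rt2 * Rt1) ∧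
        (T1 + T2 - lam • 1) * R = 1 ∧ R * (T1 + T2 - lam • 1) = 1 := by
  have : NeZero (muI c d) := ⟨by simpa [Measure.restrict_eq_zero] using hcd⟩
  have hT1' : IsPartialIntegralFst φ (fun k y => (h k y : ℂ)) T1 :=
    isPartialIntegralFst_of_kernel hφL2 hT1
  have hzero : 0 ∈ spectrum ℂ T1 := hT1'.zero_mem_spectrum
    (not_finiteDimensional_Lp_restrict_of_isCompact isCompact_Icc (by simpa using hab) 2) hφL2
  have hh : ∀ k, MemLp (fun y => (h k y : ℂ)) ⊤ (muI c d) := fun k =>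
    memLp_top_ofReal (hhmeas k) (hhbdd k)
  have hp : ∀ j, MemLp (fun x => (p j x : ℂ)) ⊤ (muI a b) := fun j =>
    memLp_top_ofReal (hpmeas j) (hpbdd j)
  exact fun lam hmem => statement11_general ⟨hφL2, hφON⟩ hh hψL2 hp hT1 hT2 hP hS1 hW1 hDT hD0
    (fun h0 => hmem (h0 ▸ .inl (.inl hzero))) hmem
end
end

section
/- Zero is an eigenvalue of infinite multiplicity of the partial integral operator T = T₁ + T₂, i.e. the kernel of T₁ + T₂ is an infinite-dimensional subspace of H. -/
/-!
Elementary tensors `f ⊗ g : (x, y) ↦ f x * g y` do all the work. The kernel of `T₁` enters only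
through the inner products of the slices `F (·, y)` with the `φ k`, so `T₁` annihilates `f ⊗ g`
as soon as `f` is orthogonal to every `φ k`; likewise `T₂` annihilates `f ⊗ g` as soon as `g` is
orthogonal to every `ψ j`. Both orthogonal complements are infinite-dimensional, because only
finitely many functions are involved. Fixing one nonzero admissible `g`, the map `f ↦ f ⊗ g` embeds
an infinite-dimensional space into the kernel of `T₁ + T₂`.
-/

open MeasureTheory Complex

noncomputable section

open scoped ENNReal InnerProductSpace

section InfiniteDimensional

variable {𝕜 : Type*} [RCLike 𝕜]

theorem not_finiteDimensional_orthogonal {E : Type*} [NormedAddCommGroup E] [InnerProductSpace 𝕜 E]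
    (hE : ¬ FiniteDimensional 𝕜 E) (K : Submodule 𝕜 E) [FiniteDimensional 𝕜 K] :
    ¬ FiniteDimensional 𝕜 Kᗮ := fun _ =>
  hE <| Module.finite_def.mpr <| K.sup_orthogonal_of_hasOrthogonalProjection ▸
    (Submodule.fg_iff_finiteDimensional _).mpr inferInstance

theorem not_finiteDimensional_Lp_two_of_pairwise_aedisjoint {α ι : Type*} [MeasurableSpace α]
    {μ : Measure α} [Infinite ι] {s : ι → Set α} (hs : ∀ i, MeasurableSet (s i))
    (hdisj : Pairwise (Function.onFun (AEDisjoint μ) s)) (hpos : ∀ i, μ (s i) ≠ 0)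
    (hfin : ∀ i, μ (s i) ≠ ∞) : ¬ FiniteDimensional 𝕜 (Lp 𝕜 2 μ) := by
  intro _
  let e (i : ι) : Lp 𝕜 2 μ := indicatorConstLp 2 (hs i) (hfin i) 1
  have e_inner (i j : ι) : ⟪e i, e j⟫_𝕜 = μ.real (s i ∩ s j) :=
    L2.inner_indicatorConstLp_one_indicatorConstLp_one (hs i) (hs j) (hfin i) (hfin j)
  have e_ne_zero (i : ι) : e i ≠ 0 := by
    rw [← inner_self_ne_zero (𝕜 := 𝕜), e_inner, Set.inter_self]
    exact_mod_cast (measureReal_ne_zero_iff (hfin i)).mpr (hpos i)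
  have e_orthogonal : Pairwise fun i j => ⟪e i, e j⟫_𝕜 = 0 := fun i j hij =>
    (e_inner i j).trans <| by
      rw [measureReal_def, hdisj hij, ENNReal.toReal_zero, RCLike.ofReal_zero]
  exact not_finite_iff_infinite.mpr ‹_›
    (linearIndependent_of_ne_zero_of_inner_eq_zero e_ne_zero e_orthogonal).finite_of_isNoetherian

theorem not_finiteDimensional_Lp_two_restrict {α : Type*} [MeasurableSpace α] [TopologicalSpace α]
    [T2Space α] [OpensMeasurableSpace α] {μ : Measure α} [μ.IsOpenPosMeasure] {s : Set α}
    (hs : (interior s).Infinite) (hμs : μ s ≠ ∞) :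
    ¬ FiniteDimensional 𝕜 (Lp 𝕜 2 (μ.restrict s)) := by
  have := hs.to_subtype
  obtain ⟨U, U_infinite, U_open, U_disjoint⟩ :=
    exists_seq_infinite_isOpen_pairwise_disjoint (interior s)
  let V (n : ℕ) : Set α := (↑) '' U n
  have V_open (n : ℕ) : IsOpen (V n) := isOpen_interior.isOpenMap_subtype_val _ (U_open n)
  have V_subset (n : ℕ) : V n ⊆ s := (Subtype.coe_image_subset _ _).trans interior_subset
  have V_measure (n : ℕ) : μ.restrict s (V n) = μ (V n) :=
    Measure.restrict_eq_self μ (V_subset n)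
  refine not_finiteDimensional_Lp_two_of_pairwise_aedisjoint (s := V)
    (fun n => (V_open n).measurableSet) (fun m n hmn => ?_) (fun n => ?_) fun n => ?_
  · exact ((Set.disjoint_image_iff Subtype.val_injective).mpr (U_disjoint hmn)).aedisjoint
  · rw [V_measure]
    exact (V_open n).measure_ne_zero μ ((U_infinite n).nonempty.image _)
  · rw [V_measure]
    exact measure_ne_top_of_subset (V_subset n) hμs

theorem not_finiteDimensional_Lp_two_muI {a b : ℝ} (hab : a < b) :
    ¬ FiniteDimensional 𝕜 (Lp 𝕜 2 (muI a b)) :=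
  not_finiteDimensional_Lp_two_restrict (by simpa only [interior_Icc] using Set.Ioo_infinite hab)
    isCompact_Icc.measure_ne_top

end InfiniteDimensional

theorem memLp_mul_prod {α β R : Type*} [MeasurableSpace α] [MeasurableSpace β] [NormedRing R]
    [NormMulClass R] {μ : Measure α} {ν : Measure β} [SFinite ν] {p : ℝ≥0∞} (hp0 : p ≠ 0)
    (hp : p ≠ ∞) {f : α → R} {g : β → R} (hf : MemLp f p μ) (hg : MemLp g p ν) :
    MemLp (fun z : α × β => f z.1 * g z.2) p (μ.prod ν) := by
  have hfg : AEStronglyMeasurable (fun z : α × β => f z.1 * g z.2) (μ.prod ν) :=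
    hf.aestronglyMeasurable.comp_fst.mul hg.aestronglyMeasurable.comp_snd
  rw [← integrable_norm_rpow_iff hfg hp0 hp]
  simpa only [Real.mul_rpow, norm_nonneg, norm_mul] using
    (hf.integrable_norm_rpow hp0 hp).mul_prod (hg.integrable_norm_rpow hp0 hp)

section ElementaryTensors

variable {α β 𝕜 : Type*} [MeasurableSpace α] [MeasurableSpace β] [RCLike 𝕜]
  {μ : Measure α} {ν : Measure β} [SFinite ν]

/-- The elementary tensor `f ⊗ g` of two square-integrable functions: the class of
`(x, y) ↦ f x * g y`. -/
def tensorLp (f : Lp 𝕜 2 μ) (g : Lp 𝕜 2 ν) : Lp 𝕜 2 (μ.prod ν) :=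
  (memLp_mul_prod two_ne_zero ENNReal.ofNat_ne_top (Lp.memLp f) (Lp.memLp g)).toLp _

theorem coeFn_tensorLp (f : Lp 𝕜 2 μ) (g : Lp 𝕜 2 ν) :
    tensorLp f g =ᵐ[μ.prod ν] fun z => f z.1 * g z.2 :=
  MemLp.coeFn_toLp _

/-- The linear map `f ↦ f ⊗ g`. -/
def tensorLpRight (g : Lp 𝕜 2 ν) : Lp 𝕜 2 μ →ₗ[𝕜] Lp 𝕜 2 (μ.prod ν) where
  toFun f := tensorLp f g
  map_add' f₁ f₂ := by
    apply Lp.ext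
    filter_upwards [coeFn_tensorLp (f₁ + f₂) g, coeFn_tensorLp f₁ g, coeFn_tensorLp f₂ g,
      Lp.coeFn_add (tensorLp f₁ g) (tensorLp f₂ g),
      Measure.quasiMeasurePreserving_fst.ae (Lp.coeFn_add f₁ f₂)] with z h h₁ h₂ hadd hfst
    rw [h, hadd, Pi.add_apply, h₁, h₂, hfst, Pi.add_apply, add_mul]
  map_smul' c f := by
    apply Lp.ext
    filter_upwards [coeFn_tensorLp (c • f) g, coeFn_tensorLp f g,
      Lp.coeFn_smul c (tensorLp f g),
      Measure.quasiMeasurePreserving_fst.ae (Lp.coeFn_smul c f)] with z h h₁ hsmul hfst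
    rw [h, RingHom.id_apply, hsmul, Pi.smul_apply, h₁, hfst, Pi.smul_apply, smul_mul_assoc]

theorem inner_tensorLp [SFinite μ] (f₁ f₂ : Lp 𝕜 2 μ) (g₁ g₂ : Lp 𝕜 2 ν) :
    ⟪tensorLp f₁ g₁, tensorLp f₂ g₂⟫_𝕜 = ⟪f₁, f₂⟫_𝕜 * ⟪g₁, g₂⟫_𝕜 := by
  rw [L2.inner_def, L2.inner_def, L2.inner_def, ← integral_prod_mul]
  apply integral_congr_ae
  filter_upwards [coeFn_tensorLp f₁ g₁, coeFn_tensorLp f₂ g₂] with z h₁ h₂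
  simp only [h₁, h₂, RCLike.inner_apply, map_mul]
  ring

theorem tensorLpRight_injective [SFinite μ] {g : Lp 𝕜 2 ν} (hg : g ≠ 0) :
    Function.Injective (tensorLpRight (μ := μ) g) := by
  rw [injective_iff_map_eq_zero]
  intro f (hfg : tensorLp f g = 0)
  rw [← inner_self_eq_zero (𝕜 := 𝕜), inner_tensorLp, mul_eq_zero] at hfg
  exact inner_self_eq_zero.mp (hfg.resolve_right (inner_self_ne_zero.mpr hg))

end ElementaryTensors

section PartialIntegrals

variable {α β ι 𝕜 : Type*} [MeasurableSpace α] [MeasurableSpace β] [RCLike 𝕜]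
  {μ : Measure α} {ν : Measure β} {φ : ι → α → 𝕜}

/-- The square-integrable functions orthogonal to every member of the family `φ`. -/
def familyOrthogonal (hφ : ∀ k, MemLp (φ k) 2 μ) : Submodule 𝕜 (Lp 𝕜 2 μ) :=
  (Submodule.span 𝕜 (Set.range fun k => (hφ k).toLp))ᗮ

theorem not_finiteDimensional_familyOrthogonal [Finite ι]
    (hμ : ¬ FiniteDimensional 𝕜 (Lp 𝕜 2 μ)) (hφ : ∀ k, MemLp (φ k) 2 μ) :
    ¬ FiniteDimensional 𝕜 (familyOrthogonal hφ) :=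
  have := FiniteDimensional.span_of_finite 𝕜 (Set.finite_range fun k => (hφ k).toLp)
  not_finiteDimensional_orthogonal hμ _

theorem integral_star_mul_eq_zero {hφ : ∀ k, MemLp (φ k) 2 μ} {f : Lp 𝕜 2 μ}
    (hf : f ∈ familyOrthogonal hφ) (k : ι) : ∫ s, star (φ k s) * f s ∂μ = 0 := by
  have inner_eq_zero : ⟪(hφ k).toLp, f⟫_𝕜 = 0 :=
    Submodule.inner_right_of_mem_orthogonal (Submodule.subset_span (Set.mem_range_self k)) hf
  rw [← inner_eq_zero, L2.inner_def]
  apply integral_congr_ae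
  filter_upwards [(hφ k).coeFn_toLp] with s hs
  rw [hs, RCLike.inner_apply, mul_comm, starRingEnd_apply]

theorem integral_sum_mul_eq_zero [Fintype ι] {hφ : ∀ k, MemLp (φ k) 2 μ} {f : Lp 𝕜 2 μ}
    (hf : f ∈ familyOrthogonal hφ) (c : ι → 𝕜) (r : 𝕜) :
    ∫ s, (∑ k, c k * star (φ k s)) * (f s * r) ∂μ = 0 := by
  have integrable_star_mul (k : ι) : Integrable (fun s => star (φ k s) * f s) μ :=
    (hφ k).star.integrable_mul (Lp.memLp f)
  calc ∫ s, (∑ k, c k * star (φ k s)) * (f s * r) ∂μ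
      = ∫ s, ∑ k, c k * r * (star (φ k s) * f s) ∂μ := by
        congr with s
        rw [Finset.sum_mul]
        exact Finset.sum_congr rfl fun k _ => by ring
    _ = ∑ k, c k * r * ∫ s, star (φ k s) * f s ∂μ := by
        rw [integral_finsetSum _ fun k _ => (integrable_star_mul k).const_mul _]
        simp only [integral_const_mul]
    _ = 0 := by simp only [integral_star_mul_eq_zero hf, mul_zero, Finset.sum_const_zero]

variable [Fintype ι] [SFinite μ]

theorem partialIntegral_fst_tensorLp [SFinite ν] {hφ : ∀ k, MemLp (φ k) 2 μ} {f : Lp 𝕜 2 μ}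
    (hf : f ∈ familyOrthogonal hφ) (g : Lp 𝕜 2 ν) (c : ι → α × β → 𝕜) :
    (fun z => ∫ s, (∑ k, c k z * star (φ k s)) * tensorLp f g (s, z.2) ∂μ) =ᵐ[μ.prod ν] 0 := by
  have slices : ∀ᵐ y ∂ν, ∀ᵐ s ∂μ, tensorLp f g (s, y) = f s * g y :=
    Measure.ae_ae_of_ae_prod
      (Measure.measurePreserving_swap.quasiMeasurePreserving.ae (coeFn_tensorLp f g))
  filter_upwards [Measure.quasiMeasurePreserving_snd.ae slices] with z hz
  rw [Pi.zero_apply, ← integral_sum_mul_eq_zero hf (c · z) (g z.2)]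
  exact integral_congr_ae (hz.mono fun s hs => by simp only [hs])

theorem partialIntegral_snd_tensorLp {hφ : ∀ k, MemLp (φ k) 2 μ} (g : Lp 𝕜 2 ν) {f : Lp 𝕜 2 μ}
    (hf : f ∈ familyOrthogonal hφ) (c : ι → β × α → 𝕜) :
    (fun z => ∫ t, (∑ k, c k z * star (φ k t)) * tensorLp g f (z.1, t) ∂μ) =ᵐ[ν.prod μ] 0 := by
  have slices : ∀ᵐ x ∂ν, ∀ᵐ t ∂μ, tensorLp g f (x, t) = g x * f t :=
    Measure.ae_ae_of_ae_prod (coeFn_tensorLp g f)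
  filter_upwards [Measure.quasiMeasurePreserving_fst.ae slices] with z hz
  rw [Pi.zero_apply, ← integral_sum_mul_eq_zero hf (c · z) (g z.1)]
  exact integral_congr_ae (hz.mono fun t ht => by simp only [ht, mul_comm])

end PartialIntegrals

theorem statement12_general {α β ι κ 𝕜 : Type*} [MeasurableSpace α] [MeasurableSpace β]
    [Fintype ι] [Fintype κ] [RCLike 𝕜] {μ : Measure α} {ν : Measure β} [SFinite μ] [SFinite ν]
    (hμ : ¬ FiniteDimensional 𝕜 (Lp 𝕜 2 μ)) (hν : ¬ FiniteDimensional 𝕜 (Lp 𝕜 2 ν))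
    {φ : ι → α → 𝕜} (hφ : ∀ k, MemLp (φ k) 2 μ) (u : ι → α × β → 𝕜)
    {ψ : κ → β → 𝕜} (hψ : ∀ j, MemLp (ψ j) 2 ν) (v : κ → α × β → 𝕜)
    (T₁ T₂ : Lp 𝕜 2 (μ.prod ν) →ₗ[𝕜] Lp 𝕜 2 (μ.prod ν))
    (hT₁ : ∀ F, T₁ F =ᵐ[μ.prod ν] fun z =>
      ∫ s, (∑ k, u k z * star (φ k s)) * F (s, z.2) ∂μ)
    (hT₂ : ∀ F, T₂ F =ᵐ[μ.prod ν] fun z =>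
      ∫ t, (∑ j, v j z * star (ψ j t)) * F (z.1, t) ∂ν) :
    ¬ FiniteDimensional 𝕜 (LinearMap.ker (T₁ + T₂)) := by
  intro _
  obtain ⟨g, hg, g_ne_zero⟩ : ∃ g ∈ familyOrthogonal hψ, g ≠ 0 :=
    Submodule.exists_mem_ne_zero_of_ne_bot fun hbot =>
      not_finiteDimensional_familyOrthogonal hν hψ (hbot ▸ inferInstance)
  have tensor_mem_ker (f : familyOrthogonal hφ) :
      tensorLpRight g f.1 ∈ LinearMap.ker (T₁ + T₂) := by
    have T₁_eq_zero : T₁ (tensorLp f.1 g) = 0 := Lp.eq_zero_iff_ae_eq_zero.mpr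
      ((hT₁ _).trans (partialIntegral_fst_tensorLp f.2 g u))
    have T₂_eq_zero : T₂ (tensorLp f.1 g) = 0 := Lp.eq_zero_iff_ae_eq_zero.mpr
      ((hT₂ _).trans (partialIntegral_snd_tensorLp f.1 hg v))
    change T₁ (tensorLp f.1 g) + T₂ (tensorLp f.1 g) = 0
    rw [T₁_eq_zero, T₂_eq_zero, add_zero]
  exact not_finiteDimensional_familyOrthogonal hμ hφ <| FiniteDimensional.of_injective
    (((tensorLpRight g).domRestrict _).codRestrict _ tensor_mem_ker)
    fun _ _ hff' => Subtype.ext (tensorLpRight_injective g_ne_zero (congrArg Subtype.val hff'))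

theorem statement12
    (a b c d : ℝ) (hab : a < b) (hcd : c < d)
    (n : ℕ) (hn : 1 ≤ n)
    (φ : Fin n → ℝ → ℂ)
    (hφL2 : ∀ k, MemLp (φ k) 2 (muI a b))
    (hφON : ∀ i j, ∫ x, star (φ i x) * φ j x ∂(muI a b) = if i = j then 1 else 0)
    (h : Fin n → ℝ → ℝ)
    (hhmeas : ∀ k, Measurable (h k))
    (hhbdd : ∀ k, ∃ C : ℝ, ∀ᵐ y ∂(muI c d), |h k y| ≤ C)
    (m : ℕ) (hm : 1 ≤ m)
    (ψ : Fin m → ℝ → ℂ)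
    (hψL2 : ∀ j, MemLp (ψ j) 2 (muI c d))
    (hψON : ∀ i j, ∫ y, star (ψ i y) * ψ j y ∂(muI c d) = if i = j then 1 else 0)
    (p : Fin m → ℝ → ℝ)
    (hpmeas : ∀ j, Measurable (p j))
    (hpbdd : ∀ j, ∃ C : ℝ, ∀ᵐ x ∂(muI a b), |p j x| ≤ C)
    (T1 T2 : Lp ℂ 2 ((muI a b).prod (muI c d)) →L[ℂ] Lp ℂ 2 ((muI a b).prod (muI c d)))
    (hT1sa : IsSelfAdjoint T1) (hT2sa : IsSelfAdjoint T2)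
    (hT1 : ∀ f : Lp ℂ 2 ((muI a b).prod (muI c d)),
      ∀ᵐ z ∂((muI a b).prod (muI c d)),
        T1 f z = ∫ s, (∑ k, φ k z.1 * star (φ k s) * (h k z.2 : ℂ)) * f (s, z.2) ∂(muI a b))
    (hT2 : ∀ f : Lp ℂ 2 ((muI a b).prod (muI c d)),
      ∀ᵐ z ∂((muI a b).prod (muI c d)),
        T2 f z = ∫ t, (∑ j, (p j z.1 : ℂ) * ψ j z.2 * star (ψ j t)) * f (z.1, t) ∂(muI c d))
    :
    ¬ FiniteDimensional ℂ ↥(LinearMap.ker (T1 + T2).toLinearMap) :=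
  statement12_general (not_finiteDimensional_Lp_two_muI hab) (not_finiteDimensional_Lp_two_muI hcd)
    hφL2 (fun k z => φ k z.1 * h k z.2) hψL2 (fun j z => p j z.1 * ψ j z.2) T1 T2
    (by simp only [mul_right_comm _ _ (star _)]; exact hT1) hT2
end
end
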